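/- arXiv:2205.11904 — 3 statements merged into one kernel-verified Lean document; each statement's English description precedes it below -/
import Mathlib

section
/- Let (X,T) be a topological dynamical system with a compatible metric d. Then the lower metric mean dimension satisfies mdim_M^-(T,X,d) = liminf_{ε→0} [ sup_{μ∈E(X,T)} ḥ^K_μ(T,ε) ] / log(1/ε) = liminf_{ε→0} [ sup_{μ∈E(X,T)} h̄^K_μ(T,ε) ] / log(1/ε), where the suprema are over all ergodic T-invariant Borel probability measures. -/
open Filter MeasureTheory Set
open scoped ENNReal Topology

noncomputable section

namespace MMD

variable {X : Type*}

/-- The `n`-th Bowen metric `d_n(x,y) = max_{0 ≤ j ≤ n-1} d(T^j x, T^j y)`. -/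
noncomputable def bowenDist [PseudoMetricSpace X] (T : X → X) (n : ℕ) (x y : X) : ℝ :=
  ⨆ j : Fin n, dist (T^[(j : ℕ)] x) (T^[(j : ℕ)] y)

/-- `r_n(T,d,ε,Z)`: minimal cardinality of an `(n,ε)`-spanning set of `Z`. -/
noncomputable def spanNum [PseudoMetricSpace X] (T : X → X) (n : ℕ) (ε : ℝ) (Z : Set X) : ℕ :=
  sInf {k | ∃ E : Finset X, E.card = k ∧ ∀ z ∈ Z, ∃ y ∈ E, bowenDist T n z y < ε}

/-- `s_n(T,d,ε,Z)`: maximal cardinality of an `(n,ε)`-separated subset of `Z`. -/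
noncomputable def sepNum [PseudoMetricSpace X] (T : X → X) (n : ℕ) (ε : ℝ) (Z : Set X) : ℕ :=
  sSup {k | ∃ F : Finset X, ↑F ⊆ Z ∧ F.card = k ∧
    ∀ x ∈ F, ∀ y ∈ F, x ≠ y → ε ≤ bowenDist T n x y}

/-- `limsup_{n→∞} (1/n) log r_n(T,d,ε,X)`. -/
noncomputable def spanGrowth [PseudoMetricSpace X] (T : X → X) (ε : ℝ) : ℝ≥0∞ :=
  Filter.limsup (fun n : ℕ => ENNReal.ofReal (Real.log (spanNum T n ε Set.univ)) / (n : ℝ≥0∞))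
    Filter.atTop

/-- Upper metric mean dimension. -/
noncomputable def mdimMUpper [PseudoMetricSpace X] (T : X → X) : ℝ≥0∞ :=
  Filter.limsup (fun ε : ℝ => spanGrowth T ε / ENNReal.ofReal (Real.log (1 / ε)))
    (nhdsWithin 0 (Set.Ioi 0))

/-- Lower metric mean dimension. -/
noncomputable def mdimMLower [PseudoMetricSpace X] (T : X → X) : ℝ≥0∞ :=
  Filter.liminf (fun ε : ℝ => spanGrowth T ε / ENNReal.ofReal (Real.log (1 / ε)))
    (nhdsWithin 0 (Set.Ioi 0))

/-- A finite (Borel) partition given as a finite set of measurable, pairwise disjoint sets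
covering the space. -/
def IsFinPartition {Y : Type*} [MeasurableSpace Y] (P : Finset (Set Y)) : Prop :=
  (∀ s ∈ P, MeasurableSet s) ∧ (∀ s ∈ P, ∀ t ∈ P, s ≠ t → Disjoint s t) ∧
    ⋃₀ (P : Set (Set Y)) = Set.univ

/-- Mutual information `I(ξ;η)` of two random variables, as the supremum over finite
measurable partitions of the target spaces. -/
noncomputable def mutualInfo {Ω A B : Type*} [MeasurableSpace Ω] [MeasurableSpace A]
    [MeasurableSpace B] (P : Measure Ω) (ξ : Ω → A) (η : Ω → B) : ℝ≥0∞ :=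
  ⨆ (p : Finset (Set A)) (_ : IsFinPartition p) (q : Finset (Set B)) (_ : IsFinPartition q),
    ENNReal.ofReal (∑ s ∈ p, ∑ t ∈ q,
      (P (ξ ⁻¹' s ∩ η ⁻¹' t)).toReal *
        Real.log ((P (ξ ⁻¹' s ∩ η ⁻¹' t)).toReal /
          ((P (ξ ⁻¹' s)).toReal * (P (η ⁻¹' t)).toReal)))

/-- The `L^∞` rate distortion function `R_{μ,L∞}(ε,s)`: the infimum of `I(ξ;η)/n` over all
`n ≥ 1` and all joint distributions `ν` of `(ξ, (η_0,…,η_{n-1}))` such that `ξ` has law `μ`,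
the `η_k` take (almost surely) finitely many values, and
`E(#{0 ≤ k ≤ n-1 : d(T^k ξ, η_k) ≥ ε}) < s n`. -/
noncomputable def RDistLInftyS [PseudoMetricSpace X] [MeasurableSpace X] (T : X → X)
    (μ : Measure X) (ε s : ℝ) : ℝ≥0∞ :=
  ⨅ (n : ℕ) (_ : 0 < n) (ν : Measure (X × (Fin n → X))) (_ : IsProbabilityMeasure ν)
    (_ : ν.map Prod.fst = μ) (_ : ∃ S : Finset X, ν {p | ∀ k, p.2 k ∈ S} = 1)
    (_ : ∫⁻ p, (Nat.card {k : Fin n // ε ≤ dist (T^[(k : ℕ)] p.1) (p.2 k)} : ℝ≥0∞) ∂ν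
        < ENNReal.ofReal (s * n)),
    mutualInfo ν Prod.fst Prod.snd / (n : ℝ≥0∞)

/-- `R_{μ,L∞}(ε) = lim_{s→0} R_{μ,L∞}(ε,s)` (the limit equals the supremum over `s > 0`
by monotonicity). -/
noncomputable def RDistLInfty [PseudoMetricSpace X] [MeasurableSpace X] (T : X → X)
    (μ : Measure X) (ε : ℝ) : ℝ≥0∞ :=
  ⨆ (s : ℝ) (_ : 0 < s), RDistLInftyS T μ ε s

/-- The `L¹` rate distortion function `R_{μ,1}(ε)`. -/
noncomputable def RDistL1 [PseudoMetricSpace X] [MeasurableSpace X] (T : X → X)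
    (μ : Measure X) (ε : ℝ) : ℝ≥0∞ :=
  ⨅ (n : ℕ) (_ : 0 < n) (ν : Measure (X × (Fin n → X))) (_ : IsProbabilityMeasure ν)
    (_ : ν.map Prod.fst = μ) (_ : ∃ S : Finset X, ν {p | ∀ k, p.2 k ∈ S} = 1)
    (_ : ∫⁻ p, ∑ k : Fin n, ENNReal.ofReal (dist (T^[(k : ℕ)] p.1) (p.2 k)) ∂ν
        < ENNReal.ofReal (ε * n)),
    mutualInfo ν Prod.fst Prod.snd / (n : ℝ≥0∞)

/-- `R^δ_μ(T,n,ε)`: minimal number of Bowen `(n,ε)`-balls whose union has `μ`-measure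
greater than `1 - δ`. -/
noncomputable def katokNum [PseudoMetricSpace X] [MeasurableSpace X] (T : X → X)
    (μ : Measure X) (n : ℕ) (ε δ : ℝ) : ℕ :=
  sInf {k | ∃ E : Finset X, E.card = k ∧
    ENNReal.ofReal (1 - δ) < μ (⋃ x ∈ E, {y | bowenDist T n x y < ε})}

/-- `h̄^K_μ(T,ε,δ)`. -/
noncomputable def katokUpperD [PseudoMetricSpace X] [MeasurableSpace X] (T : X → X)
    (μ : Measure X) (ε δ : ℝ) : ℝ≥0∞ :=
  Filter.limsup (fun n : ℕ => ENNReal.ofReal (Real.log (katokNum T μ n ε δ)) / (n : ℝ≥0∞))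
    Filter.atTop

/-- `ḥ^K_μ(T,ε,δ)`. -/
noncomputable def katokLowerD [PseudoMetricSpace X] [MeasurableSpace X] (T : X → X)
    (μ : Measure X) (ε δ : ℝ) : ℝ≥0∞ :=
  Filter.liminf (fun n : ℕ => ENNReal.ofReal (Real.log (katokNum T μ n ε δ)) / (n : ℝ≥0∞))
    Filter.atTop

/-- `h̄^K_μ(T,ε) = lim_{δ→0} h̄^K_μ(T,ε,δ)` (equal to the supremum over `δ ∈ (0,1)` by
monotonicity). -/
noncomputable def katokUpper [PseudoMetricSpace X] [MeasurableSpace X] (T : X → X)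
    (μ : Measure X) (ε : ℝ) : ℝ≥0∞ :=
  ⨆ (δ : ℝ) (_ : δ ∈ Set.Ioo (0 : ℝ) 1), katokUpperD T μ ε δ

/-- `ḥ^K_μ(T,ε) = lim_{δ→0} ḥ^K_μ(T,ε,δ)`. -/
noncomputable def katokLower [PseudoMetricSpace X] [MeasurableSpace X] (T : X → X)
    (μ : Measure X) (ε : ℝ) : ℝ≥0∞ :=
  ⨆ (δ : ℝ) (_ : δ ∈ Set.Ioo (0 : ℝ) 1), katokLowerD T μ ε δ

/-- The empirical measure `(1/n) Σ_{j=0}^{n-1} δ_{T^j x}`. -/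
noncomputable def empMeas [MeasurableSpace X] (T : X → X) (n : ℕ) (x : X) : Measure X :=
  (n : ℝ≥0∞)⁻¹ • ∑ j ∈ Finset.range n, Measure.dirac (T^[j] x)

/-- Pfister–Sullivan entropy `PS_μ(T,d,ε)`: infimum over weak* open neighborhoods `F` of `μ`
of `limsup_n (1/n) log s_n(T,d,ε,X_{n,F})`, where
`X_{n,F} = {x : (1/n) Σ_{j<n} δ_{T^j x} ∈ F}`. -/
noncomputable def PSent [MetricSpace X] [MeasurableSpace X] [OpensMeasurableSpace X]
    (T : X → X) (μ : ProbabilityMeasure X) (ε : ℝ) : ℝ≥0∞ :=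
  ⨅ (F : Set (ProbabilityMeasure X)) (_ : IsOpen F) (_ : μ ∈ F),
    Filter.limsup (fun n : ℕ => ENNReal.ofReal (Real.log (sepNum T n ε
      {x : X | ∃ h : IsProbabilityMeasure (empMeas T n x),
        (⟨empMeas T n x, h⟩ : ProbabilityMeasure X) ∈ F})) / (n : ℝ≥0∞)) Filter.atTop

/-- Partition entropy `H_μ(P) = Σ_{A∈P} -μ(A) log μ(A)`. -/
noncomputable def entP [MeasurableSpace X] (μ : Measure X) (P : Finset (Set X)) : ℝ≥0∞ :=
  ∑ A ∈ P, ENNReal.ofReal (-((μ A).toReal * Real.log ((μ A).toReal)))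

/-- The join `P^n = ∨_{j=0}^{n-1} T^{-j} P`. -/
noncomputable def joinN (T : X → X) (P : Finset (Set X)) (n : ℕ) : Finset (Set X) :=
  letI : DecidableEq (Set X) := Classical.decEq _
  (Fintype.piFinset (fun _ : Fin n => P)).image (fun f => ⋂ j : Fin n, T^[(j : ℕ)] ⁻¹' f j)

/-- `h_μ(T,P) = lim_n H_μ(P^n)/n` (the limit exists and equals the liminf). -/
noncomputable def entRate [MeasurableSpace X] (T : X → X) (μ : Measure X)
    (P : Finset (Set X)) : ℝ≥0∞ :=
  Filter.liminf (fun n : ℕ => entP μ (joinN T P n) / (n : ℝ≥0∞)) Filter.atTop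

/-- `inf { h_μ(T,P) : P a finite Borel partition with diam P ≤ ε }`. -/
noncomputable def infEntRate [PseudoMetricSpace X] [MeasurableSpace X] (T : X → X)
    (μ : Measure X) (ε : ℝ) : ℝ≥0∞ :=
  ⨅ (P : Finset (Set X)) (_ : IsFinPartition P) (_ : ∀ s ∈ P, Metric.diam s ≤ ε),
    entRate T μ P

/-- Kolmogorov–Sinai entropy `h_μ(T)`. -/
noncomputable def ksEntropy [MeasurableSpace X] (T : X → X) (μ : Measure X) : ℝ≥0∞ :=
  ⨆ (P : Finset (Set X)) (_ : IsFinPartition P), entRate T μ P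

/-- A finite open cover. -/
def IsFinOpenCover [TopologicalSpace X] (α : Finset (Set X)) : Prop :=
  (∀ A ∈ α, IsOpen A) ∧ ⋃₀ (α : Set (Set X)) = Set.univ

/-- `ord(β) = max_x #{B ∈ β : x ∈ B} - 1`. -/
noncomputable def ordCover (β : Finset (Set X)) : ℕ :=
  sSup {k | ∃ x : X, Nat.card {B : Set X // B ∈ β ∧ x ∈ B} = k} - 1

/-- `D(α) = min_{β ≻ α} ord(β)`, over finite open covers `β` refining `α`. -/
noncomputable def Dcover [TopologicalSpace X] (α : Finset (Set X)) : ℕ :=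
  sInf {k | ∃ β : Finset (Set X), IsFinOpenCover β ∧ (∀ B ∈ β, ∃ A ∈ α, B ⊆ A) ∧
    ordCover β = k}

/-- Mean (topological) dimension `mdim(X,T) = sup_α lim_n D(α^n)/n`. -/
noncomputable def mdimTop [TopologicalSpace X] (T : X → X) : ℝ≥0∞ :=
  ⨆ (α : Finset (Set X)) (_ : IsFinOpenCover α),
    Filter.liminf (fun n : ℕ => (Dcover (joinN T α n) : ℝ≥0∞) / (n : ℝ≥0∞)) Filter.atTop

/-- The marker property for a homeomorphism. -/
def MarkerProperty [TopologicalSpace X] (T : X ≃ₜ X) : Prop :=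
  ∀ N : ℕ, 0 < N → ∃ U : Set X, IsOpen U ∧
    (∀ n : ℕ, 1 ≤ n → n ≤ N → U ∩ (⇑T)^[n] '' U = ∅) ∧
    ⋃ n : ℤ, ⇑(T.toEquiv ^ n) '' U = Set.univ

/-- Upper dimension `limsup_{ε→0} F(μ,ε)/log(1/ε)` associated with a candidate `F`. -/
noncomputable def dimFUpper [MeasurableSpace X] (F : Measure X → ℝ → ℝ≥0∞)
    (μ : Measure X) : ℝ≥0∞ :=
  Filter.limsup (fun ε : ℝ => F μ ε / ENNReal.ofReal (Real.log (1 / ε)))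
    (nhdsWithin 0 (Set.Ioi 0))

/-- Lower dimension `liminf_{ε→0} F(μ,ε)/log(1/ε)` associated with a candidate `F`. -/
noncomputable def dimFLower [MeasurableSpace X] (F : Measure X → ℝ → ℝ≥0∞)
    (μ : Measure X) : ℝ≥0∞ :=
  Filter.liminf (fun ε : ℝ => F μ ε / ENNReal.ofReal (Real.log (1 / ε)))
    (nhdsWithin 0 (Set.Ioi 0))

/-- A candidate function: for each invariant probability measure `μ`, `F(μ,·)` is
non-decreasing as `ε` decreases, and `F(μ,ε) → h_μ(T)` as `ε → 0⁺`. -/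
def IsCandidate [MeasurableSpace X] (T : X → X) (F : Measure X → ℝ → ℝ≥0∞) : Prop :=
  ∀ μ : Measure X, IsProbabilityMeasure μ → MeasurePreserving T μ μ →
    (∀ ε₁ ε₂ : ℝ, 0 < ε₁ → ε₁ ≤ ε₂ → F μ ε₂ ≤ F μ ε₁) ∧
    Filter.Tendsto (F μ) (nhdsWithin 0 (Set.Ioi 0)) (nhds (ksEntropy T μ))

end MMD

open MMD

namespace KV

set_option linter.unusedSectionVars false

variable {X : Type*} [MetricSpace X]

def Cls (T : X → X) (ε : ℝ) (n : ℕ) (Z : Set X) (r : ℝ) : Prop :=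
  ∃ (ι : Type) (_ : Fintype ι) (U : ι → Set X), (Fintype.card ι : ℝ) ≤ r ∧ Z ⊆ ⋃ i, U i ∧
    ∀ i, ∀ x ∈ U i, ∀ y ∈ U i, ∀ j < n, dist (T^[j] x) (T^[j] y) < ε

theorem Cls.mono {T : X → X} {ε : ℝ} {n : ℕ} {Z Z' : Set X} {r r' : ℝ} (h : Cls T ε n Z r)
    (hZ : Z' ⊆ Z) (hr : r ≤ r') : Cls T ε n Z' r' := by
  obtain ⟨ι, _, U, h1, h2, h3⟩ := h
  exact ⟨ι, _, U, h1.trans hr, hZ.trans h2, h3⟩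

theorem Cls.union {T : X → X} {ε : ℝ} {n : ℕ} {Z Z' : Set X} {r r' : ℝ} (h : Cls T ε n Z r)
    (h' : Cls T ε n Z' r') : Cls T ε n (Z ∪ Z') (r + r') := by
  obtain ⟨ι, _, U, h1, h2, h3⟩ := h
  obtain ⟨ι', _, U', h1', h2', h3'⟩ := h'
  refine ⟨ι ⊕ ι', inferInstance, Sum.elim U U', ?_, ?_, ?_⟩
  · rw [Fintype.card_sum]; push_cast; linarith
  · rintro x (hx | hx)
    · obtain ⟨i, hi⟩ := mem_iUnion.1 (h2 hx)
      exact mem_iUnion.2 ⟨Sum.inl i, hi⟩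
    · obtain ⟨i, hi⟩ := mem_iUnion.1 (h2' hx)
      exact mem_iUnion.2 ⟨Sum.inr i, hi⟩
  · rintro (i | i)
    · exact h3 i
    · exact h3' i

theorem Cls.biUnion {κ : Type*} {T : X → X} {ε : ℝ} {n : ℕ} (s : Finset κ) (Z : κ → Set X)
    (r : κ → ℝ) (h : ∀ k ∈ s, Cls T ε n (Z k) (r k)) :
    Cls T ε n (⋃ k ∈ s, Z k) (∑ k ∈ s, r k) := by
  classical
  induction s using Finset.induction_on with
  | empty => exact ⟨Empty, inferInstance, fun e => e.elim, by simp, by simp, fun e => e.elim⟩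
  | insert a s ha ih =>
    rw [Finset.sum_insert ha, Finset.set_biUnion_insert]
    exact (h a (Finset.mem_insert_self _ _)).union
      (ih fun k hk => h k (Finset.mem_insert_of_mem hk))

theorem Cls.comp {T : X → X} {ε : ℝ} {n m : ℕ} {Z W : Set X} {r s : ℝ} (h : Cls T ε n Z r)
    (h' : Cls T ε m W s) : Cls T ε (n + m) (Z ∩ T^[n] ⁻¹' W) (r * s) := by
  obtain ⟨ι, _, U, h1, h2, h3⟩ := h
  obtain ⟨ι', _, U', h1', h2', h3'⟩ := h'
  refine ⟨ι × ι', inferInstance, fun p => U p.1 ∩ T^[n] ⁻¹' U' p.2, ?_, ?_, ?_⟩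
  · rw [Fintype.card_prod]; push_cast
    have : (0:ℝ) ≤ Fintype.card ι := by positivity
    exact mul_le_mul h1 h1' (by positivity) (this.trans h1)
  · rintro x ⟨hx, hx'⟩
    obtain ⟨i, hi⟩ := mem_iUnion.1 (h2 hx)
    obtain ⟨i', hi'⟩ := mem_iUnion.1 (h2' hx')
    exact mem_iUnion.2 ⟨(i, i'), hi, hi'⟩
  · rintro ⟨i, i'⟩ x ⟨hx, hx'⟩ y ⟨hy, hy'⟩ j hj
    by_cases hjn : j < n
    · exact h3 i x hx y hy j hjn
    · have := h3' i' _ hx' _ hy' (j - n) (by omega)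
      rw [← Function.iterate_add_apply, ← Function.iterate_add_apply] at this
      rwa [Nat.sub_add_cancel (by omega)] at this

theorem Cls.zero (T : X → X) (ε : ℝ) (Z : Set X) : Cls T ε 0 Z 1 :=
  ⟨Unit, inferInstance, fun _ => univ, by simp, fun x _ => mem_iUnion.2 ⟨(), mem_univ x⟩, by simp⟩

noncomputable def cnt (T : X → X) (Z : Set X) (N : ℕ) (x : X) : ℕ :=
  ∑ j ∈ Finset.range N, Set.indicator Zᶜ (fun _ => (1:ℕ)) (T^[j] x)

theorem cnt_succ (T : X → X) (Z : Set X) (N : ℕ) (x : X) (hx : x ∉ Z) :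
    cnt T Z (N + 1) x = cnt T Z N (T x) + 1 := by
  unfold cnt
  rw [Finset.sum_range_succ']
  simp [hx]

theorem cnt_add_le (T : X → X) (Z : Set X) (n N : ℕ) (x : X) :
    cnt T Z N (T^[n] x) ≤ cnt T Z (n + N) x := by
  unfold cnt
  rw [Finset.sum_range_add]
  simp only [← Function.iterate_add_apply]
  have : ∀ k, k + n = n + k := fun k => Nat.add_comm _ _
  simp only [this]
  omega

theorem Cls.pow {T : X → X} {ε C : ℝ} (hC : Cls T ε 1 univ C) (N : ℕ) :
    Cls T ε N univ (C ^ N) := by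
  induction N with
  | zero => simpa using Cls.zero T ε univ
  | succ k ih =>
    have := hC.comp ih
    rw [add_comm] at this
    exact this.mono (by simp) (by rw [pow_succ, mul_comm])

theorem tiling {T : X → X} {ε C h : ℝ} {n : ℕ} {Z : Set X} (hC : Cls T ε 1 univ C)
    (hC1 : 1 ≤ C) (hn : 1 ≤ n) (hh : 0 ≤ h) (hZ : Cls T ε n Z (Real.exp (n * h))) (N : ℕ) :
    ∀ b : ℕ, Cls T ε N {x | cnt T Z N x ≤ b}
      ((2 * C) ^ (b + n) * Real.exp ((h + Real.log 2 / n) * N)) := by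
  have hα : 0 ≤ h + Real.log 2 / n := by
    have := Real.log_nonneg (one_le_two)
    positivity
  have hn' : (0:ℝ) < n := by exact_mod_cast hn
  induction N using Nat.strong_induction_on with
  | _ N ih =>
  intro b
  by_cases hN : N < n
  · refine (hC.pow N).mono (subset_univ _) ?_
    have h1 : C ^ N ≤ (2 * C) ^ (b + n) :=
      (pow_le_pow_left₀ (by linarith) (by linarith) N).trans
        (pow_le_pow_right₀ (by linarith) (by omega))
    have h2 : 1 ≤ Real.exp ((h + Real.log 2 / n) * N) := Real.one_le_exp (by positivity)
    have : 0 ≤ C ^ N := by positivity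
    nlinarith
  · push Not at hN
    have c1 := hZ.comp (ih (N - n) (by omega) b)
    rw [Nat.add_sub_cancel' hN] at c1
    have e1 : Real.exp (n * h) * ((2 * C) ^ (b + n) *
        Real.exp ((h + Real.log 2 / n) * ((N - n : ℕ):ℝ))) =
        (2 * C) ^ (b + n) * Real.exp ((h + Real.log 2 / n) * N) / 2 := by
      rw [Nat.cast_sub hN]
      have : Real.exp ((h + Real.log 2 / n) * N) = Real.exp (n * h) *
          Real.exp ((h + Real.log 2 / n) * ((N : ℝ) - n)) * 2 := by
        have e2 : (2:ℝ) = Real.exp (Real.log 2) := (Real.exp_log zero_lt_two).symm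
        rw [← Real.exp_add]
        refine Eq.trans ?_ (congrArg (fun t => Real.exp (n * h + (h + Real.log 2 / n) *
          ((N : ℝ) - n)) * t) e2.symm)
        rw [← Real.exp_add]
        congr 1
        field_simp
        ring
      rw [this]; ring
    have s1 : ∀ x ∈ Z, cnt T Z N x ≤ b → x ∈ Z ∩ T^[n] ⁻¹' {x | cnt T Z (N - n) x ≤ b} := by
      intro x hx hb
      refine ⟨hx, ?_⟩
      have := cnt_add_le T Z n (N - n) x
      rw [Nat.add_sub_cancel' hN] at this
      exact this.trans hb
    rw [e1] at c1
    obtain ⟨M, rfl⟩ : ∃ M, N = M + 1 := ⟨N - 1, by omega⟩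
    cases b with
    | zero =>
      refine c1.mono ?_ ?_
      · intro x hx
        refine s1 x ?_ hx
        by_contra hxz
        have := cnt_succ T Z M x hxz
        simp only [mem_ofPred_eq] at hx
        omega
      · have : 0 ≤ (2 * C) ^ (0 + n) * Real.exp ((h + Real.log 2 / n) * ((M + 1 : ℕ):ℝ)) := by
          positivity
        linarith
    | succ b =>
      have c2 := hC.comp (ih M (by omega) b)
      rw [add_comm 1 M] at c2
      refine (c1.union c2).mono ?_ ?_
      · intro x hx
        by_cases hxz : x ∈ Z
        · exact Or.inl (s1 x hxz hx)
        · refine Or.inr ⟨mem_univ _, ?_⟩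
          have := cnt_succ T Z M x hxz
          simp only [mem_ofPred_eq] at hx
          simp only [mem_preimage, mem_ofPred_eq, Function.iterate_one]
          omega
      · have h3 : Real.exp ((h + Real.log 2 / n) * M) ≤
            Real.exp ((h + Real.log 2 / n) * ((M + 1 : ℕ):ℝ)) := by
          apply Real.exp_le_exp.2
          push_cast; nlinarith
        have h4 : C * ((2 * C) ^ (b + n) * Real.exp ((h + Real.log 2 / n) * M)) ≤
            C * ((2 * C) ^ (b + n) * Real.exp ((h + Real.log 2 / n) * ((M + 1 : ℕ):ℝ))) := by
          gcongr
        have h5 : (2 * C) ^ (b + 1 + n) = (2 * C) * (2 * C) ^ (b + n) := by ring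
        rw [h5]
        linarith

theorem bowenDist_lt_iff (T : X → X) (n : ℕ) (x y : X) {ε : ℝ} (hε : 0 < ε) :
    bowenDist T n x y < ε ↔ ∀ j < n, dist (T^[j] x) (T^[j] y) < ε := by
  unfold bowenDist
  rcases Nat.eq_zero_or_pos n with rfl | hn
  · simp [hε]
  · have : Nonempty (Fin n) := ⟨⟨0, hn⟩⟩
    constructor
    · intro h j hj
      exact (le_ciSup (f := fun j : Fin n => dist (T^[(j : ℕ)] x) (T^[(j : ℕ)] y))
        (Set.finite_range _).bddAbove ⟨j, hj⟩).trans_lt h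
    · intro h
      obtain ⟨i, hi⟩ := exists_eq_ciSup_of_finite
        (f := fun j : Fin n => dist (T^[(j : ℕ)] x) (T^[(j : ℕ)] y))
      rw [← hi]
      exact h i i.2

theorem exists_span_of_cls {T : X → X} {ε r : ℝ} {N : ℕ} (hε : 0 < ε) (h : Cls T ε N univ r) :
    ∃ E : Finset X, (E.card : ℝ) ≤ r ∧ ∀ z ∈ (univ : Set X), ∃ y ∈ E, bowenDist T N z y < ε := by
  classical
  obtain ⟨ι, _, U, h1, h2, h3⟩ := h
  let s : Finset ι := Finset.univ.filter (fun i => (U i).Nonempty)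
  have hs : ∀ i : s, (U i).Nonempty := fun i => (Finset.mem_filter.1 i.2).2
  let E : Finset X := s.attach.image (fun i => (hs i).some)
  have hE : (E.card : ℝ) ≤ r := by
    refine le_trans ?_ h1
    have a1 : E.card ≤ s.card := Finset.card_image_le.trans (by simp)
    exact_mod_cast a1.trans (Finset.card_le_univ s)
  refine ⟨E, hE, fun z _ => ?_⟩
  obtain ⟨i, hi⟩ := mem_iUnion.1 (h2 (mem_univ z))
  have his : i ∈ s := Finset.mem_filter.2 ⟨Finset.mem_univ _, ⟨z, hi⟩⟩
  refine ⟨(hs ⟨i, his⟩).some, Finset.mem_image.2 ⟨⟨i, his⟩, Finset.mem_attach _ _, rfl⟩, ?_⟩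
  rw [bowenDist_lt_iff _ _ _ _ hε]
  exact h3 i z hi _ (hs ⟨i, his⟩).some_mem

theorem spanNum_le {T : X → X} {ε r : ℝ} {N : ℕ} (hε : 0 < ε) (h : Cls T ε N univ r) :
    (spanNum T N ε univ : ℝ) ≤ r := by
  obtain ⟨E, hE, h1⟩ := exists_span_of_cls hε h
  refine le_trans ?_ hE
  have : spanNum T N ε univ ≤ E.card := Nat.sInf_le ⟨E, rfl, h1⟩
  exact_mod_cast this

theorem cls_balls {T : X → X} {ε : ℝ} (hε : 0 < ε) (n : ℕ) (E : Finset X) :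
    Cls T (2 * ε) n (⋃ x ∈ E, {y | bowenDist T n x y < ε}) E.card := by
  refine ⟨Fin E.card, inferInstance, fun i => {y | bowenDist T n (E.equivFin.symm i) y < ε},
    by simp, ?_, ?_⟩
  · intro y hy
    simp only [mem_iUnion] at hy
    obtain ⟨x, hx, hy⟩ := hy
    refine mem_iUnion.2 ⟨E.equivFin ⟨x, hx⟩, ?_⟩
    simpa using hy
  · intro i x hx y hy j hj
    have a := (bowenDist_lt_iff _ _ _ _ hε).1 hx j hj
    have b := (bowenDist_lt_iff _ _ _ _ hε).1 hy j hj
    have c := dist_triangle_left (T^[j] x) (T^[j] y) (T^[j] (E.equivFin.symm i : X))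
    linarith

theorem isOpen_balls {T : X → X} (hT : Continuous T) {ε : ℝ} (hε : 0 < ε) (n : ℕ) (E : Finset X) :
    IsOpen (⋃ x ∈ E, {y | bowenDist T n x y < ε}) := by
  refine isOpen_biUnion fun x _ => ?_
  have : {y | bowenDist T n x y < ε} =
      ⋂ j ∈ Finset.range n, {y | dist (T^[j] x) (T^[j] y) < ε} := by
    ext y
    simp [bowenDist_lt_iff _ _ _ _ hε]
  rw [this]
  refine isOpen_biInter_finset fun j _ => ?_
  exact isOpen_lt (continuous_const.dist (hT.iterate j)) continuous_const

theorem exists_cls_one [CompactSpace X] (T : X → X) {ε : ℝ} (hε : 0 < ε) :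
    ∃ C : ℝ, 1 ≤ C ∧ Cls T (2 * ε) 1 univ C := by
  obtain ⟨t, _, ht, hc⟩ := finite_cover_balls_of_compact (isCompact_univ (X := X)) hε
  refine ⟨ht.toFinset.card + 1, by simp, (cls_balls (T := T) hε 1 ht.toFinset).mono ?_ (by simp)⟩
  intro x _
  obtain ⟨y, hy, hxy⟩ := mem_iUnion₂.1 (hc (mem_univ x))
  refine mem_iUnion₂.2 ⟨y, by simpa using hy, ?_⟩
  simp only [mem_ofPred_eq]
  rw [bowenDist_lt_iff _ _ _ _ hε]
  intro j hj
  obtain rfl : j = 0 := by omega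
  simpa [dist_comm] using hxy

end KV
namespace KV

set_option linter.unusedSectionVars false

variable {X : Type*} [MetricSpace X] [CompactSpace X] [MeasurableSpace X] [BorelSpace X]

theorem isProb_empMeas (T : X → X) {n : ℕ} (hn : n ≠ 0) (x : X) :
    IsProbabilityMeasure (empMeas T n x) := by
  constructor
  simp only [empMeas, Measure.smul_apply, Measure.finsetSum_apply, measure_univ,
    Finset.sum_const, Finset.card_range, smul_eq_mul, nsmul_eq_mul, mul_one]
  exact ENNReal.inv_mul_cancel (by exact_mod_cast hn) (by simp)

def empP0 (T : X → X) (n : ℕ) (x : X) (hn : n ≠ 0) : ProbabilityMeasure X :=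
  ⟨empMeas T n x, isProb_empMeas T hn x⟩

def empP (T : X → X) (n : ℕ) (x : X) : ProbabilityMeasure X :=
  if hn : n ≠ 0 then empP0 T n x hn else diracProba x

theorem empP_coe (T : X → X) {n : ℕ} (hn : n ≠ 0) (x : X) :
    (empP T n x : Measure X) = empMeas T n x := by
  unfold empP
  rw [dif_pos hn]
  rfl

theorem integrable_cont (μ : Measure X) [IsFiniteMeasure μ] {f : X → ℝ} (hf : Continuous f) :
    Integrable f μ :=
  (BoundedContinuousFunction.mkOfCompact ⟨f, hf⟩).integrable μ

theorem integral_empP (T : X → X) {n : ℕ} (hn : n ≠ 0) (x : X) {f : X → ℝ} (hf : Continuous f) :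
    ∫ y, f y ∂(empP T n x : Measure X) = birkhoffAverage ℝ T f n x := by
  rw [empP_coe T hn, empMeas, integral_smul_measure, integral_finsetSum_measure]
  · simp [birkhoffAverage, birkhoffSum]
  · intro i _
    exact integrable_cont _ hf

theorem cnt_le (T : X → X) (A : Set X) (n : ℕ) (x : X) : cnt T A n x ≤ n := by
  unfold cnt
  calc _ ≤ ∑ j ∈ Finset.range n, 1 := Finset.sum_le_sum fun j _ => by
        unfold indicator; split <;> simp
    _ = n := by simp

theorem empP_apply (T : X → X) {n : ℕ} (hn : n ≠ 0) (x : X) {A : Set X} (hA : IsOpen A) :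
    (empP T n x : Measure X) A = ((n : ℝ≥0∞))⁻¹ * ((n - cnt T A n x : ℕ) : ℝ≥0∞) := by
  classical
  rw [empP_coe T hn, empMeas, Measure.smul_apply, Measure.finsetSum_apply, smul_eq_mul]
  congr 1
  simp only [Measure.dirac_apply' _ hA.measurableSet]
  have : n - cnt T A n x = ∑ j ∈ Finset.range n, Set.indicator A (fun _ => (1:ℕ)) (T^[j] x) := by
    rw [Nat.sub_eq_iff_eq_add (cnt_le T A n x)]
    unfold cnt
    rw [← Finset.sum_add_distrib]
    have : ∀ j ∈ Finset.range n, Set.indicator A (fun _ => (1:ℕ)) (T^[j] x) +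
        Set.indicator Aᶜ (fun _ => (1:ℕ)) (T^[j] x) = 1 := fun j _ => by
          by_cases h : T^[j] x ∈ A <;> simp [h]
    rw [Finset.sum_congr rfl this]
    simp
  rw [this]
  push_cast
  exact Finset.sum_congr rfl fun j _ => by
    by_cases h : T^[j] x ∈ A <;> simp [h]

theorem cnt_le_of_emp (T : X → X) {n : ℕ} (hn : n ≠ 0) (x : X) {A : Set X} (hA : IsOpen A) {δ : ℝ}
    (h : ENNReal.ofReal (1 - δ) < (empP T n x : Measure X) A) : (cnt T A n x : ℝ) ≤ δ * n := by
  classical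
  rw [empP_apply T hn x hA] at h
  have hle := cnt_le T A n x
  have hn' : (0:ℝ) < n := by positivity
  have e : ((n : ℝ≥0∞))⁻¹ * ((n - cnt T A n x : ℕ) : ℝ≥0∞) =
      ENNReal.ofReal ((n:ℝ)⁻¹ * ((n:ℝ) - cnt T A n x)) := by
    rw [ENNReal.ofReal_mul (by positivity), ENNReal.ofReal_inv_of_pos hn', ENNReal.ofReal_natCast,
      ← Nat.cast_sub hle, ENNReal.ofReal_natCast]
  rw [e] at h
  have h3 : (1 - δ) < (n:ℝ)⁻¹ * ((n:ℝ) - cnt T A n x) :=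
    (ENNReal.ofReal_lt_ofReal_iff'.1 h).1
  rw [inv_mul_eq_div, lt_div_iff₀ hn'] at h3
  linarith

theorem isOpen_meas {A : Set X} (hA : IsOpen A) (c : ℝ≥0∞) :
    IsOpen {ν : ProbabilityMeasure X | c < (ν : Measure X) A} := by
  rw [isOpen_iff_eventually]
  intro ν hν
  have := ProbabilityMeasure.le_liminf_measure_open_of_tendsto
    (tendsto_id : Tendsto (id : ProbabilityMeasure X → _) (𝓝 ν) (𝓝 ν)) hA
  exact eventually_lt_of_lt_liminf (lt_of_lt_of_le hν this)

theorem secondCountable_pm : SecondCountableTopology (ProbabilityMeasure X) := by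
  let := TopologicalSpace.metrizableSpaceMetric (ProbabilityMeasure X)
  infer_instance

/-- limits of empirical measures are invariant -/
theorem invariant_of_tendsto {T : X → X} (hT : Continuous T) {ι : Type*} {l : Filter ι} [l.NeBot]
    {N : ι → ℕ} (hN : Tendsto N l atTop) (x : ι → X) {ν : ProbabilityMeasure X}
    (h : Tendsto (fun i => empP T (N i) (x i)) l (𝓝 ν)) :
    MeasurePreserving T (ν : Measure X) (ν : Measure X) := by
  refine ⟨hT.measurable, ?_⟩
  have : IsProbabilityMeasure (Measure.map T (ν : Measure X)) :=
    Measure.isProbabilityMeasure_map hT.aemeasurable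
  refine ext_of_forall_integral_eq_of_IsFiniteMeasure fun f => ?_
  rw [integral_map hT.aemeasurable (f.continuous.aestronglyMeasurable)]
  rw [ProbabilityMeasure.tendsto_iff_forall_integral_tendsto] at h
  have h1 := h f
  have h2 := h (f.compContinuous ⟨T, hT⟩)
  have h0 : ∀ᶠ i in l, N i ≠ 0 := (hN.eventually (eventually_gt_atTop 0)).mono fun i hi => hi.ne'
  have h3 := h2.sub h1
  have h4 : Tendsto (fun i => (N i : ℝ)⁻¹ * (2 * ‖f‖)) l (𝓝 0) := by
    have := (tendsto_inv_atTop_nhds_zero_nat (𝕜 := ℝ)).comp hN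
    simpa using this.mul_const (2 * ‖f‖)
  have h5 := squeeze_zero_norm' ?_ h4 (f := fun i =>
    (∫ ω, (f.compContinuous ⟨T, hT⟩) ω ∂(empP T (N i) (x i) : Measure X)) -
      ∫ ω, f ω ∂(empP T (N i) (x i) : Measure X))
  · have := tendsto_nhds_unique h3 h5
    simp only [BoundedContinuousFunction.compContinuous_apply, ContinuousMap.coe_mk] at this
    linarith
  · filter_upwards [h0] with i hi
    rw [integral_empP T hi _ f.continuous, integral_empP T hi _
      (f.compContinuous ⟨T, hT⟩).continuous]
    have : birkhoffAverage ℝ T (f.compContinuous ⟨T, hT⟩) (N i) (x i) -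
        birkhoffAverage ℝ T f (N i) (x i) = (N i : ℝ)⁻¹ * (f (T^[N i] (x i)) - f (x i)) := by
      simp only [birkhoffAverage, birkhoffSum, smul_eq_mul, ← mul_sub]
      congr 1
      have e := Finset.sum_range_sub (fun k => f (T^[k] (x i))) (N i)
      simp only [Function.iterate_zero, id_eq] at e
      rw [← Finset.sum_sub_distrib, ← e]
      refine Finset.sum_congr rfl fun k _ => ?_
      rw [Function.iterate_succ_apply']
      rfl
    rw [this, norm_mul, norm_inv, Real.norm_natCast]
    gcongr
    calc ‖f (T^[N i] (x i)) - f (x i)‖ ≤ ‖f (T^[N i] (x i))‖ + ‖f (x i)‖ := norm_sub_le _ _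
      _ ≤ ‖f‖ + ‖f‖ := add_le_add (f.norm_coe_le_norm _) (f.norm_coe_le_norm _)
      _ = 2 * ‖f‖ := by ring

/-- Step 1 compactness -/
theorem exists_finite_cover {T : X → X} (hT : Continuous T) {κ : Type*} (V : κ → Set X)
    (hV : ∀ k, IsOpen (V k)) (δ : ℝ)
    (h : ∀ μ : ProbabilityMeasure X, MeasurePreserving T (μ : Measure X) (μ : Measure X) →
      ∃ k, ENNReal.ofReal (1 - δ) < (μ : Measure X) (V k)) :
    ∃ s : Finset κ, ∀ᶠ N : ℕ in atTop, ∀ x : X, ∃ k ∈ s, (cnt T (V k) N x : ℝ) ≤ δ * N := by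
  let O : κ → Set (ProbabilityMeasure X) := fun k =>
    {ν : ProbabilityMeasure X | ENNReal.ofReal (1 - δ) < (ν : Measure X) (V k)}
  have hO : ∀ k, IsOpen (O k) := fun k => isOpen_meas (hV k) _
  by_contra hcon
  push Not at hcon
  -- for every finite s, frequently bad
  let l : Filter (Finset κ × ℕ) := atTop ×ˢ atTop
  have key : ∀ p : Finset κ × ℕ, ∃ q : ℕ × X, p.2 ≤ q.1 ∧ 
      ∀ k ∈ p.1, δ * q.1 < (cnt T (V k) q.1 q.2 : ℝ) := by
    rintro ⟨s, n⟩
    obtain ⟨N, hN, x, hx⟩ := (frequently_atTop.1 (hcon s)) n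
    exact ⟨(N, x), hN, hx⟩
  choose q hq1 hq2 using key
  have hN : Tendsto (fun p => (q p).1) l atTop :=
    tendsto_atTop_mono hq1 tendsto_snd
  have : l.NeBot := by infer_instance
  let U := Ultrafilter.of l
  have hU : (U : Filter _) ≤ l := Ultrafilter.of_le l
  obtain ⟨ν, -, hν⟩ := (isCompact_univ (X := ProbabilityMeasure X)).ultrafilter_le_nhds
    (U.map fun p => empP T (q p).1 (q p).2) (by simp)
  have hν' : Tendsto (fun p => empP T (q p).1 (q p).2) U (𝓝 ν) := hν
  have inv := invariant_of_tendsto hT (hN.mono_left hU) _ hν'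
  obtain ⟨k, hk⟩ := h ν inv
  have e1 := hν'.eventually ((hO k).mem_nhds hk)
  have e2 : ∀ᶠ p in (U : Filter (Finset κ × ℕ)), k ∈ p.1 := by
    refine hU ?_
    have : ∀ᶠ s : Finset κ in atTop, k ∈ s := 
      (eventually_ge_atTop {k}).mono fun s hs => hs (Finset.mem_singleton_self k)
    exact tendsto_fst.eventually this
  have e3 : ∀ᶠ p in (U : Filter (Finset κ × ℕ)), (q p).1 ≠ 0 := 
    hU ((hN.eventually (eventually_gt_atTop 0)).mono fun i hi => hi.ne')
  obtain ⟨p, h1, h2, h3⟩ := (e1.and (e2.and e3)).exists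
  have := cnt_le_of_emp T h3 _ (hV k) h1
  linarith [hq2 p k h2]

end KV
namespace KV

set_option linter.unusedSectionVars false

variable {X : Type*} [MetricSpace X] [CompactSpace X] [MeasurableSpace X] [BorelSpace X]

theorem continuous_bavg {T : X → X} (hT : Continuous T) {f : X → ℝ} (hf : Continuous f) (n : ℕ) :
    Continuous (birkhoffAverage ℝ T f n) := by
  unfold birkhoffAverage birkhoffSum
  exact (continuous_finsetSum _ fun i _ => hf.comp (hT.iterate i)).const_smul ((n:ℝ)⁻¹)

theorem memLp_cont (μ : Measure X) [IsFiniteMeasure μ] {f : X → ℝ} (hf : Continuous f) (p : ℝ≥0∞) :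
    MemLp f p μ := by
  obtain ⟨C, hC⟩ := isCompact_univ.exists_bound_of_continuousOn hf.continuousOn
  exact MemLp.of_bound hf.aestronglyMeasurable C (Eventually.of_forall fun x => hC x (mem_univ x))

theorem mean_ergodic {T : X → X} (hT : Continuous T) {μ : Measure X} [IsProbabilityMeasure μ]
    (hμ : MeasurePreserving T μ μ) {f : X → ℝ} (hf : Continuous f) :
    ∃ g : X → ℝ, AEStronglyMeasurable g μ ∧
      Tendsto (fun n => ∫⁻ x, ‖birkhoffAverage ℝ T f n x - g x‖ₑ ∂μ) atTop (𝓝 0) := by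
  let K : Lp ℝ 2 μ →L[ℝ] Lp ℝ 2 μ :=
    (Lp.compMeasurePreservingₗᵢ ℝ T hμ).toContinuousLinearMap
  have hK : ‖K‖ ≤ 1 := LinearIsometry.norm_toContinuousLinearMap_le _
  let F : Lp ℝ 2 μ := (memLp_cont μ hf 2).toLp f
  have h := K.tendsto_birkhoffAverage_orthogonalProjection hK F
  set G : Lp ℝ 2 μ := ((K.eqLocus (1 : Lp ℝ 2 μ →L[ℝ] Lp ℝ 2 μ)).orthogonalProjectionOnto F :)
  refine ⟨G, Lp.aestronglyMeasurable G, ?_⟩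
  have hit : ∀ n, K^[n] F = ((memLp_cont μ hf 2).comp_measurePreserving (hμ.iterate n)).toLp _ := by
    intro n
    have := Lp.compMeasurePreserving_iterate (E := ℝ) (p := 2) hμ n
    have e : (K : Lp ℝ 2 μ → Lp ℝ 2 μ) = Lp.compMeasurePreserving (E := ℝ) (p := 2) T hμ := rfl
    rw [e, this]
    rfl
  have hae : ∀ n, (birkhoffAverage ℝ K id n F : Lp ℝ 2 μ) =ᵐ[μ] birkhoffAverage ℝ T f n := by
    intro n
    unfold birkhoffAverage birkhoffSum
    refine (Lp.coeFn_smul _ _).trans ?_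
    have h1 : ∀ᵐ x ∂μ, ∀ k, (K^[k] F : Lp ℝ 2 μ) x = f (T^[k] x) := by
      rw [ae_all_iff]
      intro k
      rw [hit]
      exact MemLp.coeFn_toLp _
    have h2 := Lp.coeFn_finsetSum (p := 2) (μ := μ) (Finset.range n) (fun k => K^[k] F)
    filter_upwards [h1, h2] with x hx hx2
    simp only [Pi.smul_apply, id_eq]
    rw [hx2]
    simp [hx]
  have h3 := (Lp.tendsto_Lp_iff_tendsto_eLpNorm' _ _).1 h
  refine tendsto_of_tendsto_of_tendsto_of_le_of_le tendsto_const_nhds h3 (fun _ => zero_le) ?_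
  intro n
  have h4 : ∫⁻ x, ‖birkhoffAverage ℝ T f n x - G x‖ₑ ∂μ =
      eLpNorm (⇑(birkhoffAverage ℝ K id n F) - ⇑G) 1 μ := by
    rw [eLpNorm_one_eq_lintegral_enorm]
    refine lintegral_congr_ae ?_
    filter_upwards [hae n] with x hx
    simp [hx]
  simp only
  rw [h4]
  exact eLpNorm_le_eLpNorm_of_exponent_le (by norm_num)
    ((Lp.aestronglyMeasurable _).sub (Lp.aestronglyMeasurable _))

theorem exists_subseq {T : X → X} (hT : Continuous T) {μ : Measure X} [IsProbabilityMeasure μ]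
    (hμ : MeasurePreserving T μ μ) (f : ℕ → X → ℝ) (hf : ∀ m, Continuous (f m)) :
    ∃ φ : ℕ → ℕ, StrictMono φ ∧ ∀ᵐ x ∂μ, ∀ m, ∃ c,
      Tendsto (fun k => birkhoffAverage ℝ T (f m) (φ k) x) atTop (𝓝 c) := by
  choose g hg hgt using fun m => mean_ergodic hT hμ (hf m)
  have : ∀ k : ℕ, ∀ᶠ n in atTop, ∀ m ∈ Finset.range (k+1),
      ∫⁻ x, ‖birkhoffAverage ℝ T (f m) n x - g m x‖ₑ ∂μ < (1/2 : ℝ≥0∞)^k := by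
    intro k
    rw [eventually_all_finset]
    intro m _
    refine (hgt m).eventually_lt_const ?_
    exact ENNReal.pow_pos (by simp) k
  obtain ⟨φ, hφ, h⟩ := extraction_forall_of_eventually this
  refine ⟨φ, hφ, ?_⟩
  rw [ae_all_iff]
  intro m
  have hm : ∀ n, AEMeasurable (fun x => ‖birkhoffAverage ℝ T (f m) n x - g m x‖ₑ) μ := fun n =>
    ((continuous_bavg hT (hf m) n).aestronglyMeasurable.sub (hg m)).enorm
  have h1 : ∫⁻ x, ∑' k, ‖birkhoffAverage ℝ T (f m) (φ (k + m)) x - g m x‖ₑ ∂μ ≠ ∞ := by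
    rw [lintegral_tsum fun k => hm _]
    refine ne_top_of_le_ne_top ?_ (ENNReal.tsum_le_tsum (g := fun k => (1/2 : ℝ≥0∞)^k) fun k => ?_)
    · rw [ENNReal.tsum_geometric]
      simp
    · refine (h (k+m) m (by simp)).le.trans ?_
      exact pow_le_pow_right_of_le_one' (by simp) (by omega)
  have h2 := ae_lt_top' (AEMeasurable.tsum fun k => hm (φ (k+m))) h1
  filter_upwards [h2] with x hx
  refine ⟨g m x, ?_⟩
  have h3 := ENNReal.tendsto_atTop_zero_of_tsum_ne_top hx.ne
  rw [← tendsto_add_atTop_iff_nat m]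
  rw [tendsto_iff_edist_tendsto_0]
  simpa only [edist_eq_enorm_sub] using h3

end KV
namespace KV

set_option linter.unusedSectionVars false

variable {X : Type*} [MetricSpace X] [CompactSpace X] [MeasurableSpace X] [BorelSpace X]

theorem continuous_integral_cm (ν : Measure X) [IsProbabilityMeasure ν] :
    Continuous fun f : C(X, ℝ) => ∫ x, f x ∂ν := by
  refine (LipschitzWith.of_dist_le_mul (K := 1) fun f g => ?_).continuous
  rw [dist_eq_norm, ← integral_sub (integrable_cont ν f.continuous) (integrable_cont ν g.continuous)]
  refine (norm_integral_le_of_norm_le_const (C := dist f g)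
    (Eventually.of_forall fun x => ?_)).trans (by simp)
  rw [← dist_eq_norm]
  exact ContinuousMap.dist_apply_le_dist x

theorem integral_bavg {T : X → X} (hT : Continuous T) {ρ : Measure X} [IsFiniteMeasure ρ]
    (hρ : MeasurePreserving T ρ ρ) {f : X → ℝ} (hf : Continuous f) {n : ℕ} (hn : n ≠ 0) :
    ∫ x, birkhoffAverage ℝ T f n x ∂ρ = ∫ x, f x ∂ρ := by
  simp only [birkhoffAverage, birkhoffSum, smul_eq_mul]
  have h0 := integral_finsetSum (μ := ρ) (f := fun i x => f (T^[i] x)) (Finset.range n)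
    fun i _ => integrable_cont ρ (hf.comp (hT.iterate i))
  rw [integral_const_mul, h0]
  have : ∀ i ∈ Finset.range n, ∫ x, f (T^[i] x) ∂ρ = ∫ x, f x ∂ρ := by
    intro i _
    conv_rhs => rw [← (hρ.iterate i).map_eq]
    rw [integral_map (hT.iterate i).aemeasurable hf.aestronglyMeasurable]
  rw [Finset.sum_congr rfl this]
  simp only [Finset.sum_const, Finset.card_range, nsmul_eq_mul]
  field_simp

theorem continuous_pm_integral {f : X → ℝ} (hf : Continuous f) :
    Continuous fun ν : ProbabilityMeasure X => ∫ x, f x ∂(ν : Measure X) := by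
  have := fun ν => (ProbabilityMeasure.tendsto_iff_forall_integral_tendsto
    (μs := (id : ProbabilityMeasure X → _)) (F := 𝓝 ν) (μ := ν)).1 tendsto_id
    (BoundedContinuousFunction.mkOfCompact ⟨f, hf⟩)
  exact continuous_iff_continuousAt.2 fun ν => this ν

theorem emp_tendsto {T : X → X} (x : X) {φ : ℕ → ℕ} (hφ : StrictMono φ)
    {f : ℕ → C(X, ℝ)} (hd : DenseRange f)
    (h : ∀ m, ∃ c, Tendsto (fun k => birkhoffAverage ℝ T (f m) (φ k) x) atTop (𝓝 c)) :
    ∃ ν, Tendsto (fun k => empP T (φ k) x) atTop (𝓝 ν) := by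
  obtain ⟨ν, -, hν⟩ := isCompact_univ (X := ProbabilityMeasure X)
    (f := map (fun k => empP T (φ k) x) atTop) (by simp)
  refine ⟨ν, ?_⟩
  refine isCompact_univ.le_nhds_of_unique_clusterPt (by simp) fun ν' _ hν' => ?_
  have key : ∀ m, ∀ ρ : ProbabilityMeasure X, ClusterPt ρ (map (fun k => empP T (φ k) x) atTop) →
      ∀ c, Tendsto (fun k => birkhoffAverage ℝ T (f m) (φ k) x) atTop (𝓝 c) →
      ∫ y, f m y ∂(ρ : Measure X) = c := by
    intro m ρ hρ c hc
    have h1 := hρ.map (continuous_pm_integral (f m).continuous).continuousAt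
      (tendsto_map)
    rw [map_map] at h1
    have h2 : Tendsto ((fun ν : ProbabilityMeasure X => ∫ x, f m x ∂(ν : Measure X)) ∘
        (fun k => empP T (φ k) x)) atTop (𝓝 c) := by
      refine hc.congr' ?_
      filter_upwards [eventually_gt_atTop 0] with k hk
      exact (integral_empP T (by have := hφ.id_le k; simp at this; omega) x (f m).continuous).symm
    by_contra hne
    exact (h1.mono h2).neBot.ne (disjoint_iff.1 (disjoint_nhds_nhds.2 hne))
  have heq : ∀ g : C(X, ℝ), ∫ y, g y ∂(ν' : Measure X) = ∫ y, g y ∂(ν : Measure X) := by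
    intro g
    have := hd.equalizer (continuous_integral_cm (ν' : Measure X))
      (continuous_integral_cm (ν : Measure X)) (by
        funext m
        obtain ⟨c, hc⟩ := h m
        exact (key m _ hν' c hc).trans (key m _ hν c hc).symm)
    exact congrFun this g
  apply Subtype.ext
  change (ν' : Measure X) = (ν : Measure X)
  refine ext_of_forall_integral_eq_of_IsFiniteMeasure fun g => ?_
  exact heq g.toContinuousMap

theorem var_eq {T : X → X} (hT : Continuous T) {ν : Measure X} [IsProbabilityMeasure ν]
    (hν : MeasurePreserving T ν ν) {f : X → ℝ} (hf : Continuous f) {n : ℕ} (hn : n ≠ 0) :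
    ∫ x, (birkhoffAverage ℝ T f n x - ∫ y, f y ∂ν)^2 ∂ν =
    ∫ x, (birkhoffAverage ℝ T f n x)^2 ∂ν - (∫ y, f y ∂ν)^2 := by
  set c := ∫ y, f y ∂ν with hc
  have ha := continuous_bavg hT hf n
  have e : ∀ x, (birkhoffAverage ℝ T f n x - c)^2 =
      ((birkhoffAverage ℝ T f n x)^2 - (2*c) * birkhoffAverage ℝ T f n x) + c^2 := fun x => by ring
  simp_rw [e]
  rw [integral_add (integrable_cont ν (by fun_prop)) (integrable_cont ν (by fun_prop)),
    integral_sub (integrable_cont ν (by fun_prop)) (integrable_cont ν (by fun_prop)),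
    integral_const_mul, integral_bavg hT hν hf hn]
  simp
  ring

theorem ergodic_of_var {T : X → X} (hT : Continuous T) {ν : Measure X} [IsProbabilityMeasure ν]
    (hν : MeasurePreserving T ν ν) {f : ℕ → C(X, ℝ)} (hd : DenseRange f)
    (h : ∀ m, ∀ η : ℝ, 0 < η → ∃ n : ℕ, n ≠ 0 ∧
      ∫ x, (birkhoffAverage ℝ T (f m) n x)^2 ∂ν - (∫ y, f m y ∂ν)^2 < η) : Ergodic T ν := by
  refine ⟨hν, ⟨fun B hB hTB => ?_⟩⟩
  have hρ : MeasurePreserving T (ν.restrict B) (ν.restrict B) := by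
    have := hν.restrict_preimage hB
    rwa [hTB] at this
  have h1 : ∀ m, ∫ y in B, f m y ∂ν = (ν.real B) * ∫ y, f m y ∂ν := by
    intro m
    rw [← sub_eq_zero]
    by_contra hne
    have hpos := abs_pos.2 hne
    set D := |∫ y in B, f m y ∂ν - (ν.real B) * ∫ y, f m y ∂ν| with hD
    set s := D / 4 with hs
    have hs0 : 0 < s := by positivity
    obtain ⟨n, hn, hv⟩ := h m (s^2) (by positivity)
    rw [← var_eq hT hν (f m).continuous hn] at hv
    have ha := continuous_bavg hT (f m).continuous n
    set c := ∫ y, f m y ∂ν with hc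
    have e1 : ∫ y in B, f m y ∂ν - (ν.real B) * c =
        ∫ y in B, (birkhoffAverage ℝ T (f m) n y - c) ∂ν := by
      rw [integral_sub (integrable_cont _ ha) (integrable_cont _ continuous_const),
        integral_bavg hT hρ (f m).continuous hn]
      simp
    have e2 : D ≤ ∫ y, |birkhoffAverage ℝ T (f m) n y - c| ∂ν := by
      rw [hD, e1]
      refine (abs_integral_le_integral_abs).trans ?_
      exact setIntegral_le_integral (integrable_cont ν (by fun_prop))
        (Eventually.of_forall fun x => abs_nonneg _)
    have e3 : ∫ y, |birkhoffAverage ℝ T (f m) n y - c| ∂ν ≤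
        ∫ y, (s + s⁻¹ * (birkhoffAverage ℝ T (f m) n y - c)^2) ∂ν := by
      refine integral_mono (integrable_cont ν (by fun_prop)) (integrable_cont ν (by fun_prop)) ?_
      intro y
      set t := birkhoffAverage ℝ T (f m) n y - c
      have : s * |t| ≤ s * (s + s⁻¹ * t^2) := by
        have e : s * (s + s⁻¹ * t^2) = s^2 + |t|^2 := by rw [sq_abs]; field_simp
        rw [e]
        nlinarith [sq_nonneg (s - |t|), sq_nonneg (s + |t|), abs_nonneg t]
      exact le_of_mul_le_mul_left this hs0
    rw [integral_add (integrable_cont ν (by fun_prop)) (integrable_cont ν (by fun_prop)),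
      integral_const_mul] at e3
    have e4 : s⁻¹ * ∫ y, (birkhoffAverage ℝ T (f m) n y - c)^2 ∂ν ≤ s⁻¹ * s^2 := by gcongr
    have e5 : s⁻¹ * s^2 = s := by field_simp
    simp only [integral_const, probReal_univ, one_smul] at e3
    have : D = 4 * s := by rw [hs]; ring
    linarith
  have h2 : ∀ g : C(X, ℝ), ∫ y in B, g y ∂ν = (ν.real B) * ∫ y, g y ∂ν := by
    intro g
    have c1 : Continuous fun g : C(X, ℝ) => ∫ y in B, g y ∂ν := by
      refine (LipschitzWith.of_dist_le_mul (K := 1) fun f g => ?_).continuous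
      rw [dist_eq_norm, ← integral_sub (integrable_cont _ f.continuous)
        (integrable_cont _ g.continuous)]
      refine (norm_integral_le_of_norm_le_const (C := dist f g)
        (Eventually.of_forall fun x => ?_)).trans ?_
      · rw [← dist_eq_norm]
        exact ContinuousMap.dist_apply_le_dist x
      · simp only [NNReal.coe_one, one_mul, measureReal_restrict_apply_univ]
        exact mul_le_of_le_one_right dist_nonneg measureReal_le_one
    exact congrFun (hd.equalizer c1 ((continuous_integral_cm ν).const_mul _) (funext h1)) g
  have h3 : ν.restrict B = (ν B) • ν := by
    have : IsFiniteMeasure (ν B • ν) := Measure.smul_finite ν (measure_ne_top ν B)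
    refine ext_of_forall_integral_eq_of_IsFiniteMeasure fun g => ?_
    rw [integral_smul_measure]
    exact h2 g.toContinuousMap
  have h4 : ν B = ν B * ν B := by
    have := congrArg (fun ρ : Measure X => ρ B) h3
    simpa using this
  have h5 : ν B = 0 ∨ ν B = 1 := by
    by_cases h0 : ν B = 0
    · exact Or.inl h0
    · right
      have := (ENNReal.mul_eq_left h0 (measure_ne_top ν B)).1 h4.symm
      exact this
  rw [Filter.eventuallyConst_set']
  rcases h5 with h5 | h5
  · left; exact ae_eq_empty.2 h5
  · right
    exact ae_eq_univ.2 ((prob_compl_eq_zero_iff hB).2 h5)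

theorem bavg_bound {T : X → X} {f : X → ℝ} {C : ℝ} (hC : ∀ x, ‖f x‖ ≤ C) {n : ℕ} (hn : n ≠ 0)
    (x : X) : ‖birkhoffAverage ℝ T f n x‖ ≤ C := by
  simp only [birkhoffAverage, birkhoffSum, smul_eq_mul, norm_mul, norm_inv, Real.norm_natCast]
  have h1 : ‖∑ k ∈ Finset.range n, f (T^[k] x)‖ ≤ n * C := by
    refine (norm_sum_le_of_le _ (fun i _ => hC _)).trans ?_
    simp
  have hn' : (0:ℝ) < n := by positivity
  rw [inv_mul_le_iff₀ hn']
  exact h1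

theorem var_liminf {T : X → X} (hT : Continuous T) {μ : Measure X} [IsProbabilityMeasure μ]
    (hμ : MeasurePreserving T μ μ) {φ : ℕ → ℕ} (hφ : StrictMono φ) {ν : X → ProbabilityMeasure X}
    (hν : ∀ᵐ x ∂μ, Tendsto (fun k => empP T (φ k) x) atTop (𝓝 (ν x))) {f : X → ℝ}
    (hf : Continuous f) : ∀ᵐ x ∂μ, ∀ η : ℝ, 0 < η → ∃ n : ℕ, n ≠ 0 ∧
      ∫ y, (birkhoffAverage ℝ T f n y)^2 ∂(ν x : Measure X) -
        (∫ y, f y ∂(ν x : Measure X))^2 < η := by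
  obtain ⟨C, hC⟩ := isCompact_univ.exists_bound_of_continuousOn hf.continuousOn
  replace hC : ∀ x, ‖f x‖ ≤ C := fun x => hC x (mem_univ x)
  let ψ : ℕ → ℕ := fun k => φ (k + 1)
  have hψ0 : ∀ k, ψ k ≠ 0 := fun k => by
    have := hφ.id_le (k+1); simp only [id_eq] at this; simp only [ψ]; omega
  have hψt : Tendsto ψ atTop atTop := hφ.tendsto_atTop.comp (tendsto_add_atTop_nat 1)
  replace hν : ∀ᵐ x ∂μ, Tendsto (fun k => empP T (ψ k) x) atTop (𝓝 (ν x)) := by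
    filter_upwards [hν] with x hx
    exact hx.comp (tendsto_add_atTop_nat 1)
  have lim : ∀ q : X → ℝ, Continuous q → ∀ᵐ x ∂μ,
      Tendsto (fun k => birkhoffAverage ℝ T q (ψ k) x) atTop (𝓝 (∫ y, q y ∂(ν x : Measure X))) := by
    intro q hq
    filter_upwards [hν] with x hx
    refine (((continuous_pm_integral hq).tendsto _).comp hx).congr fun k => ?_
    exact integral_empP T (hψ0 k) x hq
  let a : ℕ → X → ℝ := fun k => birkhoffAverage ℝ T f (ψ k)
  have ha : ∀ k, Continuous (a k) := fun k => continuous_bavg hT hf _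
  have hab : ∀ k x, ‖a k x‖ ≤ C := fun k x => bavg_bound hC (hψ0 k) x
  have hab2 : ∀ k x, ‖(a k x)^2‖ ≤ C^2 := fun k x => by
    rw [norm_pow]; exact pow_le_pow_left₀ (norm_nonneg _) (hab k x) 2
  let b : X → ℝ := fun x => ∫ y, f y ∂(ν x : Measure X)
  let I : ℕ → ℝ := fun k => ∫ x, (a k x)^2 ∂μ
  have hI : Tendsto I atTop (𝓝 (∫ x, (b x)^2 ∂μ)) := by
    refine tendsto_integral_of_dominated_convergence (fun _ => C^2)
      (fun k => ((ha k).pow 2).aestronglyMeasurable) (integrable_const _)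
      (fun k => Eventually.of_forall (hab2 k)) ?_
    filter_upwards [lim f hf] with x hx
    exact hx.pow 2
  let V : ℕ → X → ℝ := fun k x => ∫ y, (a k y)^2 ∂(ν x : Measure X) - (b x)^2
  let Q : ℕ → ℕ → X → ℝ := fun k j x =>
    birkhoffAverage ℝ T (fun y => (a k y)^2) (ψ j) x - (a j x)^2
  have hQc : ∀ k j, Continuous (Q k j) := fun k j =>
    (continuous_bavg hT ((ha k).pow 2) _).sub ((ha j).pow 2)
  have hQb : ∀ k j x, ‖Q k j x‖ ≤ C^2 + C^2 := fun k j x =>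
    (norm_sub_le _ _).trans (add_le_add (bavg_bound (hab2 k) (hψ0 j) x) (hab2 j x))
  have hQV : ∀ k, ∀ᵐ x ∂μ, Tendsto (fun j => Q k j x) atTop (𝓝 (V k x)) := by
    intro k
    filter_upwards [lim f hf, lim _ ((ha k).pow 2)] with x hx hx2
    exact hx2.sub (hx.pow 2)
  have hVm : ∀ k, AEMeasurable (V k) μ := fun k =>
    aemeasurable_of_tendsto_metrizable_ae atTop (fun j => (hQc k j).aemeasurable) (hQV k)
  have hVb : ∀ k, ∀ᵐ x ∂μ, ‖V k x‖ ≤ C^2 + C^2 := by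
    intro k
    filter_upwards [hQV k] with x hx
    exact le_of_tendsto hx.norm (Eventually.of_forall fun j => hQb k j x)
  have hVi : ∀ k, Integrable (V k) μ := fun k =>
    Integrable.of_bound (hVm k).aestronglyMeasurable _ (hVb k)
  have hVI : ∀ k, ∫ x, V k x ∂μ = I k - ∫ x, (b x)^2 ∂μ := by
    intro k
    have h1 : Tendsto (fun j => ∫ x, Q k j x ∂μ) atTop (𝓝 (∫ x, V k x ∂μ)) :=
      tendsto_integral_of_dominated_convergence (fun _ => C^2 + C^2)
        (fun j => (hQc k j).aestronglyMeasurable) (integrable_const _)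
        (fun j => Eventually.of_forall (hQb k j)) (hQV k)
    refine tendsto_nhds_unique h1 ((hI.const_sub (I k)).congr fun j => ?_)
    have h2 := integral_bavg hT hμ ((ha k).pow 2) (hψ0 j)
    have h3 := integral_sub (integrable_cont μ (continuous_bavg hT ((ha k).pow 2) (ψ j)))
      (integrable_cont μ ((ha j).pow 2))
    rw [h2] at h3
    exact h3.symm
  have hV0 : ∀ k, 0 ≤ᵐ[μ] V k := by
    intro k
    filter_upwards [hν] with x hx
    have inv := invariant_of_tendsto hT hψt (fun _ => x) hx
    have := var_eq hT inv hf (hψ0 k)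
    simp only [V, b, a, Pi.zero_apply]
    rw [← this]
    exact integral_nonneg fun y => sq_nonneg _
  have hL : ∀ k, ∫⁻ x, ENNReal.ofReal (V k x) ∂μ = ENNReal.ofReal (I k - ∫ x, (b x)^2 ∂μ) := by
    intro k
    rw [← hVI k, ofReal_integral_eq_lintegral_ofReal (hVi k) (hV0 k)]
  have hlim : Tendsto (fun k => ∫⁻ x, ENNReal.ofReal (V k x) ∂μ) atTop (𝓝 0) := by
    simp_rw [hL]
    have := hI.sub_const (∫ x, (b x)^2 ∂μ)
    rw [sub_self] at this
    simpa using ENNReal.tendsto_ofReal this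
  have hF := lintegral_liminf_le' (μ := μ) (u := (atTop : Filter ℕ)) (fun k => (hVm k).ennreal_ofReal)
  rw [hlim.liminf_eq] at hF
  have hF2 : ∫⁻ x, liminf (fun k => ENNReal.ofReal (V k x)) atTop ∂μ = 0 := le_antisymm hF zero_le
  have hLm : AEMeasurable (fun x => liminf (fun k => ENNReal.ofReal (V k x)) atTop) μ := by
    refine ⟨fun x => liminf (fun k => ENNReal.ofReal ((hVm k).mk (V k) x)) atTop,
      Measurable.liminf fun k => (hVm k).measurable_mk.ennreal_ofReal, ?_⟩
    filter_upwards [ae_all_iff.2 fun k => (hVm k).ae_eq_mk] with x hx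
    simp_rw [hx]
  rw [lintegral_eq_zero_iff' hLm] at hF2
  filter_upwards [hF2] with x hx η hη
  have h5 : liminf (fun k => ENNReal.ofReal (V k x)) atTop < ENNReal.ofReal η := by
    rw [hx]; simpa using hη
  obtain ⟨k, hk⟩ := (frequently_lt_of_liminf_lt (by isBoundedDefault) h5).exists
  exact ⟨ψ k, hψ0 k, (ENNReal.ofReal_lt_ofReal_iff hη).1 hk⟩

/-- weak form of the ergodic decomposition -/
theorem ergodic_ae {T : X → X} (hT : Continuous T) {μ : Measure X} [IsProbabilityMeasure μ]
    (hμ : MeasurePreserving T μ μ) : ∃ φ : ℕ → ℕ, StrictMono φ ∧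
      ∀ᵐ x ∂μ, ∃ ν : ProbabilityMeasure X, Ergodic T (ν : Measure X) ∧
        Tendsto (fun k => empP T (φ k) x) atTop (𝓝 ν) := by
  let f := TopologicalSpace.denseSeq C(X, ℝ)
  have hd : DenseRange f := TopologicalSpace.denseRange_denseSeq _
  obtain ⟨φ, hφ, h⟩ := exists_subseq hT hμ (fun m => f m) (fun m => (f m).continuous)
  refine ⟨φ, hφ, ?_⟩
  have h1 : ∀ x, ∃ ν : ProbabilityMeasure X, (∀ m, ∃ c,
      Tendsto (fun k => birkhoffAverage ℝ T (f m) (φ k) x) atTop (𝓝 c)) →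
      Tendsto (fun k => empP T (φ k) x) atTop (𝓝 ν) := by
    intro x
    by_cases hx : ∀ m, ∃ c, Tendsto (fun k => birkhoffAverage ℝ T (f m) (φ k) x) atTop (𝓝 c)
    · obtain ⟨ν, hν⟩ := emp_tendsto x hφ hd hx
      exact ⟨ν, fun _ => hν⟩
    · exact ⟨diracProba x, fun h => absurd h hx⟩
  choose ν hν using h1
  have h2 : ∀ᵐ x ∂μ, Tendsto (fun k => empP T (φ k) x) atTop (𝓝 (ν x)) := by
    filter_upwards [h] with x hx using hν x hx
  have h3 := ae_all_iff.2 fun m => var_liminf hT hμ hφ h2 (f m).continuous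
  filter_upwards [h2, h3] with x hx hx3
  refine ⟨ν x, ?_, hx⟩
  exact ergodic_of_var hT (invariant_of_tendsto hT hφ.tendsto_atTop (fun _ => x) hx) hd hx3

end KV
namespace KV

set_option linter.unusedSectionVars false

variable {X : Type*} [MetricSpace X] [CompactSpace X] [MeasurableSpace X] [BorelSpace X]

theorem isOpen_cnt {T : X → X} (hT : Continuous T) {A : Set X} (hA : IsOpen A) (L : ℕ) (c : ℝ) :
    IsOpen {x | (cnt T A L x : ℝ) ≤ c} := by
  classical
  rw [isOpen_iff_eventually]
  intro x hx
  have h : ∀ᶠ y in 𝓝 x, ∀ j ∈ Finset.range L, T^[j] x ∈ A → T^[j] y ∈ A := by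
    rw [eventually_all_finset]
    intro j _
    by_cases h : T^[j] x ∈ A
    · filter_upwards [(hA.preimage (hT.iterate j)).mem_nhds h] with y hy _ using hy
    · exact Eventually.of_forall fun y h' => absurd h' h
  filter_upwards [h] with y hy
  refine le_trans ?_ hx
  have : cnt T A L y ≤ cnt T A L x := by
    unfold cnt
    refine Finset.sum_le_sum fun j hj => ?_
    by_cases h : T^[j] x ∈ A
    · simp [h, hy j hj h]
    · by_cases h' : T^[j] y ∈ A <;> simp [h, h']
  exact_mod_cast this

/-- good pairs -/
def GP (T : X → X) (ε : ℝ) (n0 : ℕ) (h : ℝ) (p : ℕ × Set X) : Prop :=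
  n0 ≤ p.1 ∧ IsOpen p.2 ∧ Cls T ε p.1 p.2 (Real.exp (p.1 * h))

theorem tile_sum {T : X → X} {ε C h η δ : ℝ} {n0 : ℕ} (hC : Cls T ε 1 univ C)
    (hC1 : 1 ≤ C) (hn0 : 1 ≤ n0) (hh : 0 ≤ h) (hη : 0 < η) (hlog : Real.log 2 / n0 ≤ η)
    (hδ : 0 < δ) (hδ1 : δ * Real.log (2 * C) ≤ η) {κ : Type*} (I : Finset κ) (P : κ → ℕ × Set X)
    (hP : ∀ i ∈ I, GP T ε n0 h (P i)) :
    ∀ᶠ L : ℕ in atTop, Cls T ε L (⋃ i ∈ I, {x | (cnt T (P i).2 L x : ℝ) ≤ δ * L})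
      (Real.exp (L * (h + 3 * η))) := by
  have hK : ∀ᶠ L : ℕ in atTop, ∑ i ∈ I, (2 * C) ^ (P i).1 ≤ Real.exp (L * η) := by
    have : Tendsto (fun L : ℕ => Real.exp (L * η)) atTop atTop :=
      Real.tendsto_exp_atTop.comp (tendsto_natCast_atTop_atTop.atTop_mul_const hη)
    exact this.eventually_ge_atTop _
  filter_upwards [hK] with L hL
  have h1 : ∀ i ∈ I, Cls T ε L {x | (cnt T (P i).2 L x : ℝ) ≤ δ * L}
      ((2 * C) ^ (P i).1 * Real.exp (L * (h + 2 * η))) := by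
    intro i hi
    obtain ⟨a1, a2, a3⟩ := hP i hi
    have ht := tiling hC hC1 (hn0.trans a1) hh a3 L ⌊δ * L⌋₊
    refine ht.mono ?_ ?_
    · intro x hx
      exact Nat.le_floor hx
    · rw [pow_add, mul_comm ((2 * C) ^ ⌊δ * L⌋₊), mul_assoc]
      have hC0 : 0 < 2 * C := by linarith
      refine mul_le_mul_of_nonneg_left ?_ (by positivity)
      have e1 : (2 * C) ^ ⌊δ * L⌋₊ = Real.exp (⌊δ * L⌋₊ * Real.log (2 * C)) := by
        rw [← Real.rpow_natCast, Real.rpow_def_of_pos hC0, mul_comm]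
      rw [e1, ← Real.exp_add]
      refine Real.exp_le_exp.2 ?_
      have f1 : (⌊δ * L⌋₊ : ℝ) ≤ δ * L := Nat.floor_le (by positivity)
      have f2 : 0 ≤ Real.log (2 * C) := Real.log_nonneg (by linarith)
      have f3 : (⌊δ * L⌋₊ : ℝ) * Real.log (2 * C) ≤ L * η := by
        calc _ ≤ (δ * L) * Real.log (2 * C) := by gcongr
          _ = L * (δ * Real.log (2 * C)) := by ring
          _ ≤ L * η := by gcongr
      have f4 : Real.log 2 / (P i).1 ≤ η := by
        refine le_trans ?_ hlog
        have : (1:ℝ) ≤ n0 := by exact_mod_cast hn0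
        have : (n0:ℝ) ≤ (P i).1 := by exact_mod_cast a1
        have := Real.log_nonneg (one_le_two)
        gcongr
      have f5 : (h + Real.log 2 / (P i).1) * L ≤ (h + η) * L := by gcongr
      linarith
  refine (Cls.biUnion I _ _ h1).mono subset_rfl ?_
  rw [← Finset.sum_mul]
  calc _ ≤ Real.exp (L * η) * Real.exp (L * (h + 2 * η)) := by gcongr
    _ = _ := by rw [← Real.exp_add]; congr 1; ring

theorem good_of_inv {T : X → X} (hT : Continuous T) {ε C h η δ : ℝ} {n0 : ℕ}
    (hC : Cls T ε 1 univ C)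
    (hC1 : 1 ≤ C) (hn0 : 1 ≤ n0) (hh : 0 ≤ h) (hη : 0 < η) (hlog : Real.log 2 / n0 ≤ η)
    (hδ : 0 < δ) (hδ1 : δ * Real.log (2 * C) ≤ η)
    (herg : ∀ ν : ProbabilityMeasure X, Ergodic T (ν : Measure X) → ∃ p, GP T ε n0 h p ∧
      ENNReal.ofReal (1 - δ) < (ν : Measure X) p.2)
    (μ : ProbabilityMeasure X) (hμ : MeasurePreserving T (μ : Measure X) (μ : Measure X)) :
    ∃ p, GP T ε n0 (h + 3 * η) p ∧ ENNReal.ofReal (1 - δ) < (μ : Measure X) p.2 := by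
  obtain ⟨φ, hφ, hae⟩ := ergodic_ae hT hμ
  let O : {p // GP T ε n0 h p} → Set (ProbabilityMeasure X) := fun p =>
    {ν : ProbabilityMeasure X | ENNReal.ofReal (1 - δ) < (ν : Measure X) p.1.2}
  have hO : ∀ p, IsOpen (O p) := fun p => isOpen_meas p.2.2.1 _
  have := secondCountable_pm (X := X)
  obtain ⟨t, htc, ht⟩ := TopologicalSpace.isOpen_iUnion_countable O hO
  have hcov : ∀ ν : ProbabilityMeasure X, Ergodic T (ν : Measure X) → ∃ p ∈ t, ν ∈ O p := by
    intro ν hν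
    obtain ⟨p, hp, hp2⟩ := herg ν hν
    have : ν ∈ ⋃ i, O i := mem_iUnion.2 ⟨⟨p, hp⟩, hp2⟩
    rw [← ht] at this
    simpa using this
  have hne : t.Nonempty := by
    obtain ⟨x, ν, hν, -⟩ := hae.exists
    obtain ⟨p, hp, -⟩ := hcov ν hν
    exact ⟨p, hp⟩
  obtain ⟨e, rfl⟩ := htc.exists_eq_range hne
  let W : ℕ → Set X := fun I => {x | ∀ k ≥ I, ∃ i ≤ I, (cnt T (e i).1.2 (φ k) x : ℝ) ≤ δ * φ k}
  have hW : Monotone W := by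
    intro I J hIJ x hx k hk
    obtain ⟨i, hi, h⟩ := hx k (hIJ.trans hk)
    exact ⟨i, hi.trans hIJ, h⟩
  have hWU : (μ : Measure X) (⋃ I, W I) = 1 := by
    have : ∀ᵐ x ∂(μ : Measure X), x ∈ ⋃ I, W I := by
      filter_upwards [hae] with x hx
      obtain ⟨ν, hν, hxν⟩ := hx
      obtain ⟨_, ⟨i, rfl⟩, hi⟩ := hcov ν hν
      have h1 := hxν.eventually ((hO (e i)).mem_nhds hi)
      obtain ⟨k0, hk0⟩ := eventually_atTop.1 (h1.and (eventually_gt_atTop 0))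
      refine mem_iUnion.2 ⟨max i k0, fun k hk => ⟨i, le_max_left _ _, ?_⟩⟩
      obtain ⟨b1, b2⟩ := hk0 k ((le_max_right _ _).trans hk)
      refine cnt_le_of_emp T ?_ x (e i).2.2.1 b1
      have := hφ.id_le k; simp only [id_eq] at this; omega
    have h2 : (μ : Measure X) (⋃ I, W I) = (μ : Measure X) univ :=
      measure_congr (eventuallyEq_univ.2 this)
    rw [h2, measure_univ]
  have hlim := tendsto_measure_iUnion_atTop (μ := (μ : Measure X)) hW
  rw [hWU] at hlim
  have hlt : ENNReal.ofReal (1 - δ) < 1 := by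
    rw [← ENNReal.ofReal_one]
    exact (ENNReal.ofReal_lt_ofReal_iff one_pos).2 (by linarith)
  obtain ⟨I, hI⟩ := (hlim.eventually (lt_mem_nhds hlt)).exists
  have hts := tile_sum hC hC1 hn0 hh hη hlog hδ hδ1 (Finset.range (I + 1)) (fun i => (e i).1)
    (fun i _ => (e i).2)
  have hev := hφ.tendsto_atTop.eventually (hts.and (eventually_ge_atTop n0))
  obtain ⟨k, ⟨c1, c2⟩, hk⟩ := (hev.and (eventually_ge_atTop I)).exists
  refine ⟨(φ k, ⋃ i ∈ Finset.range (I + 1), {x | (cnt T (e i).1.2 (φ k) x : ℝ) ≤ δ * φ k}),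
    ⟨c2, isOpen_biUnion fun i _ => isOpen_cnt hT (e i).2.2.1 _ _, c1⟩, hI.trans_le ?_⟩
  refine measure_mono fun x hx => ?_
  obtain ⟨i, hi, h⟩ := hx k hk
  exact mem_iUnion₂.2 ⟨i, by simp; omega, h⟩

theorem cls_univ {T : X → X} (hT : Continuous T) {ε C h η δ : ℝ} {n0 : ℕ}
    (hC : Cls T ε 1 univ C)
    (hC1 : 1 ≤ C) (hn0 : 1 ≤ n0) (hh : 0 ≤ h) (hη : 0 < η) (hlog : Real.log 2 / n0 ≤ η)
    (hδ : 0 < δ) (hδ1 : δ * Real.log (2 * C) ≤ η)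
    (herg : ∀ ν : ProbabilityMeasure X, Ergodic T (ν : Measure X) → ∃ p, GP T ε n0 h p ∧
      ENNReal.ofReal (1 - δ) < (ν : Measure X) p.2) :
    ∀ᶠ N : ℕ in atTop, Cls T ε N univ (Real.exp (N * (h + 6 * η))) := by
  obtain ⟨s, hs⟩ := exists_finite_cover hT (κ := {p // GP T ε n0 (h + 3 * η) p})
    (fun p => p.1.2) (fun p => p.2.2.1) δ (fun μ hμ => by
      obtain ⟨p, hp, hp2⟩ := good_of_inv hT hC hC1 hn0 hh hη hlog hδ hδ1 herg μ hμ
      exact ⟨⟨p, hp⟩, hp2⟩)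
  have hts := tile_sum hC hC1 hn0 (h := h + 3 * η) (by positivity) hη hlog hδ hδ1 s (fun i => i.1)
    (fun i _ => i.2)
  filter_upwards [hs, hts] with N h1 h2
  refine h2.mono (fun x _ => ?_) (Real.exp_le_exp.2 (by
    have : (0:ℝ) ≤ N := by positivity
    nlinarith))
  obtain ⟨k, hk, h3⟩ := h1 x
  exact mem_iUnion₂.2 ⟨k, hk, h3⟩

theorem exists_span (T : X → X) {ε : ℝ} (hε : 0 < ε) (n : ℕ) :
    ∃ E : Finset X, ∀ z ∈ (univ : Set X), ∃ y ∈ E, bowenDist T n z y < ε := by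
  obtain ⟨C, -, hC⟩ := exists_cls_one T (half_pos hε)
  rw [mul_div_cancel₀ _ two_ne_zero] at hC
  obtain ⟨E, -, h⟩ := exists_span_of_cls hε (hC.pow n)
  exact ⟨E, h⟩

theorem ofReal_one_sub_lt {δ : ℝ} (hδ : 0 < δ) : ENNReal.ofReal (1 - δ) < 1 := by
  rw [← ENNReal.ofReal_one]
  exact (ENNReal.ofReal_lt_ofReal_iff one_pos).2 (by linarith)

theorem span_meas (T : X → X) {ε : ℝ} (hε : 0 < ε) (n : ℕ) (μ : Measure X) [IsProbabilityMeasure μ]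
    {δ : ℝ} (hδ : 0 < δ) {E : Finset X}
    (h : ∀ z ∈ (univ : Set X), ∃ y ∈ E, bowenDist T n z y < ε) :
    ENNReal.ofReal (1 - δ) < μ (⋃ x ∈ E, {y | bowenDist T n x y < ε}) := by
  have : (⋃ x ∈ E, {y | bowenDist T n x y < ε}) = univ := by
    refine eq_univ_of_forall fun z => ?_
    obtain ⟨y, hy, hd⟩ := h z (mem_univ z)
    refine mem_iUnion₂.2 ⟨y, hy, ?_⟩
    change bowenDist T n y z < ε
    rw [bowenDist_lt_iff _ _ _ _ hε] at hd ⊢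
    intro j hj
    rw [dist_comm]
    exact hd j hj
  rw [this, measure_univ]
  exact ofReal_one_sub_lt hδ

theorem katokNum_le (T : X → X) {ε : ℝ} (hε : 0 < ε) (n : ℕ) (μ : Measure X)
    [IsProbabilityMeasure μ] {δ : ℝ} (hδ : 0 < δ) :
    katokNum T μ n ε δ ≤ spanNum T n ε univ := by
  obtain ⟨E0, h0⟩ := exists_span T hε n
  obtain ⟨E, hE, h⟩ := Nat.sInf_mem (s := {k | ∃ E : Finset X, E.card = k ∧
    ∀ z ∈ (univ : Set X), ∃ y ∈ E, bowenDist T n z y < ε}) ⟨_, E0, rfl, h0⟩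
  refine Nat.sInf_le ⟨E, hE, span_meas T hε n μ hδ h⟩

theorem katokUpper_le (T : X → X) {ε : ℝ} (hε : 0 < ε) (μ : Measure X)
    [IsProbabilityMeasure μ] : katokUpper T μ ε ≤ spanGrowth T ε := by
  refine iSup₂_le fun δ hδ => ?_
  refine limsup_le_limsup (Eventually.of_forall fun n => ?_)
  refine ENNReal.div_le_div_right (ENNReal.ofReal_le_ofReal ?_) _
  have := katokNum_le T hε n μ hδ.1
  rcases Nat.eq_zero_or_pos (katokNum T μ n ε δ) with h0 | h0
  · rw [h0]
    simpa using Real.log_natCast_nonneg _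
  · exact Real.log_le_log (by exact_mod_cast h0) (by exact_mod_cast this)

theorem katokLower_le (T : X → X) (ε : ℝ) (μ : Measure X) :
    katokLower T μ ε ≤ katokUpper T μ ε :=
  iSup₂_mono fun _ _ => liminf_le_limsup

theorem good_of_erg {T : X → X} (hT : Continuous T) {ε h δ : ℝ} (hε : 0 < ε) (n0 : ℕ)
    (hn0 : 1 ≤ n0) (hδ : δ ∈ Ioo (0:ℝ) 1) (ν : ProbabilityMeasure X)
    (hk : katokLower T (ν : Measure X) ε < ENNReal.ofReal h) :
    ∃ p, GP T (2 * ε) n0 h p ∧ ENNReal.ofReal (1 - δ) < (ν : Measure X) p.2 := by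
  have h1 : katokLowerD T (ν : Measure X) ε δ < ENNReal.ofReal h :=
    (le_iSup₂ (f := fun δ (_ : δ ∈ Ioo (0:ℝ) 1) => katokLowerD T (ν : Measure X) ε δ) δ hδ).trans_lt
      hk
  have h2 := frequently_lt_of_liminf_lt (by isBoundedDefault) h1
  obtain ⟨n, hn, hnn⟩ := (h2.and_eventually (eventually_ge_atTop n0)).exists
  obtain ⟨E0, h0⟩ := exists_span T hε n
  obtain ⟨E, hE, hEm⟩ := Nat.sInf_mem (s := {k | ∃ E : Finset X, E.card = k ∧
    ENNReal.ofReal (1 - δ) < (ν : Measure X) (⋃ x ∈ E, {y | bowenDist T n x y < ε})})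
    ⟨_, E0, rfl, span_meas T hε n ν hδ.1 h0⟩
  refine ⟨(n, _), ⟨hnn, isOpen_balls hT hε n E, (cls_balls hε n E).mono subset_rfl ?_⟩, hEm⟩
  have hE' : E.card = katokNum T (ν : Measure X) n ε δ := hE
  have hh : 0 < h := by
    by_contra hneg
    rw [ENNReal.ofReal_of_nonpos (not_lt.1 hneg)] at hk
    exact not_lt_zero hk
  have hn1 : (0:ℝ) < n := by
    have : 1 ≤ n := hn0.trans hnn
    exact_mod_cast this
  rw [← ENNReal.ofReal_natCast, ← ENNReal.ofReal_div_of_pos hn1,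
    ENNReal.ofReal_lt_ofReal_iff hh, div_lt_iff₀ hn1, ← hE'] at hn
  simp only
  rcases Nat.eq_zero_or_pos E.card with h0 | h0
  · rw [h0]; simpa using (Real.exp_pos _).le
  · rw [← Real.log_le_iff_le_exp (by exact_mod_cast h0)]
    linarith

theorem spanGrowth_le {T : X → X} (hT : Continuous T) {ε : ℝ} (hε : 0 < ε) :
    spanGrowth T (2 * ε) ≤
      ⨆ (μ : Measure X) (_ : IsProbabilityMeasure μ) (_ : Ergodic T μ), katokLower T μ ε := by
  refine le_of_forall_gt fun c hc => ?_
  set G := ⨆ (μ : Measure X) (_ : IsProbabilityMeasure μ) (_ : Ergodic T μ), katokLower T μ ε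
    with hG
  obtain ⟨h', hh1, hh2⟩ := ENNReal.lt_iff_exists_nnreal_btwn.1 hc
  obtain ⟨h'', hh3, hh4⟩ := ENNReal.lt_iff_exists_nnreal_btwn.1 hh2
  have hlt : (h' : ℝ) < h'' := by exact_mod_cast hh3
  set η : ℝ := ((h'' : ℝ) - h') / 6 with hηd
  have hη : 0 < η := by rw [hηd]; linarith
  obtain ⟨C, hC1, hC⟩ := exists_cls_one T hε
  obtain ⟨n0, hn0⟩ := exists_nat_gt (max 1 (Real.log 2 / η))
  have hn1 : (1:ℝ) < n0 := (le_max_left _ _).trans_lt hn0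
  have hlog : Real.log 2 / n0 ≤ η := by
    have := (le_max_right _ _).trans_lt hn0
    rw [div_lt_iff₀ hη] at this
    rw [div_le_iff₀ (by linarith)]
    linarith
  have hl : 0 ≤ Real.log (2 * C) := Real.log_nonneg (by linarith)
  set δ : ℝ := min (1/2) (η / (Real.log (2 * C) + 1)) with hδd
  have hδ : 0 < δ := by rw [hδd]; positivity
  have hδ1 : δ * Real.log (2 * C) ≤ η := by
    calc _ ≤ (η / (Real.log (2 * C) + 1)) * (Real.log (2 * C) + 1) := by
          gcongr
          · exact min_le_right _ _
          · linarith
      _ = η := by field_simp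
  have herg : ∀ ν : ProbabilityMeasure X, Ergodic T (ν : Measure X) → ∃ p,
      GP T (2 * ε) n0 h' p ∧ ENNReal.ofReal (1 - δ) < (ν : Measure X) p.2 := by
    intro ν hν
    refine good_of_erg hT hε n0 (by exact_mod_cast hn1.le)
      ⟨hδ, (min_le_left _ _).trans_lt (by norm_num)⟩ ν ?_
    rw [ENNReal.ofReal_coe_nnreal]
    refine lt_of_le_of_lt ?_ hh1
    exact le_iSup_of_le (ν : Measure X) (le_iSup_of_le inferInstance
      (le_iSup_of_le hν le_rfl))
  have hcl := cls_univ hT hC hC1 (by exact_mod_cast hn1.le) h'.coe_nonneg hη hlog hδ hδ1 herg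
  refine lt_of_le_of_lt ?_ hh4
  refine limsup_le_of_le (by isBoundedDefault) ?_
  filter_upwards [hcl, eventually_gt_atTop 0] with N hN hN0
  have e : (h' : ℝ) + 6 * η = h'' := by rw [hηd]; ring
  rw [e] at hN
  have hs := spanNum_le (by positivity) hN
  have hN1 : (0:ℝ) < N := by exact_mod_cast hN0
  rw [← ENNReal.ofReal_natCast, ← ENNReal.ofReal_div_of_pos hN1, ← ENNReal.ofReal_coe_nnreal]
  refine ENNReal.ofReal_le_ofReal ?_
  rw [div_le_iff₀ hN1]
  rcases Nat.eq_zero_or_pos (spanNum T N (2 * ε) univ) with h0 | h0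
  · rw [h0]; simp; positivity
  · rw [Real.log_le_iff_le_exp (by exact_mod_cast h0), mul_comm (h'' : ℝ)]
    exact hs

theorem liminf_shift {S G : ℝ → ℝ≥0∞} (h : ∀ ε, 0 < ε → S (2 * ε) ≤ G ε) :
    liminf (fun ε : ℝ => S ε / ENNReal.ofReal (Real.log (1 / ε))) (nhdsWithin 0 (Set.Ioi 0)) ≤
    liminf (fun ε : ℝ => G ε / ENNReal.ofReal (Real.log (1 / ε))) (nhdsWithin 0 (Set.Ioi 0)) := by
  refine le_of_forall_gt fun c hc => ?_
  obtain ⟨c1, hL, hc1⟩ := ENNReal.lt_iff_exists_nnreal_btwn.1 hc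
  obtain ⟨c2, h12, hc2⟩ := ENNReal.lt_iff_exists_nnreal_btwn.1 hc1
  have hlt : (c1 : ℝ) < c2 := by exact_mod_cast h12
  refine lt_of_le_of_lt ?_ hc2
  have hf := frequently_lt_of_liminf_lt (by isBoundedDefault) hL
  have ht : Tendsto (fun ε : ℝ => 2 * ε) (𝓝[>] 0) (𝓝[>] 0) := by
    refine tendsto_nhdsWithin_iff.2 ⟨?_, ?_⟩
    · have : Tendsto (fun ε : ℝ => 2 * ε) (𝓝 0) (𝓝 (2 * 0)) := (continuous_const_mul 2).tendsto 0
      rw [mul_zero] at this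
      exact this.mono_left nhdsWithin_le_nhds
    · filter_upwards [self_mem_nhdsWithin] with ε hε
      have : (0:ℝ) < ε := hε
      simpa using this
  have hl : Tendsto (fun ε : ℝ => Real.log (1 / ε)) (𝓝[>] 0) atTop := by
    have := Real.tendsto_log_atTop.comp (tendsto_inv_nhdsGT_zero (𝕜 := ℝ))
    refine this.congr fun ε => ?_
    simp
  have hl2 := hl.eventually_ge_atTop ((c2 * Real.log 2) / (c2 - c1))
  have hl3 := hl.eventually_gt_atTop (Real.log 2)
  have hpos : ∀ᶠ ε : ℝ in 𝓝[>] 0, 0 < ε := self_mem_nhdsWithin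
  have key : ∃ᶠ ε : ℝ in 𝓝[>] 0, S (2 * ε) / ENNReal.ofReal (Real.log (1 / (2 * ε))) ≤ c2 := by
    refine (hf.and_eventually (hl2.and (hl3.and hpos))).mono ?_
    rintro ε ⟨hε1, hε2, hε3, hε⟩
    have hlog2 : 0 < Real.log 2 := Real.log_pos one_lt_two
    have hpl : 0 < Real.log (1 / ε) := hlog2.trans hε3
    have e : Real.log (1 / (2 * ε)) = Real.log (1 / ε) - Real.log 2 := by
      rw [one_div, one_div, Real.log_inv, Real.log_inv, Real.log_mul two_ne_zero hε.ne']
      ring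
    rw [div_le_iff₀ (by linarith)] at hε2
    refine ENNReal.div_le_of_le_mul ?_
    refine (h ε hε).trans ?_
    have h1 : G ε < c1 * ENNReal.ofReal (Real.log (1 / ε)) := by
      rwa [ENNReal.div_lt_iff (Or.inl (by simpa using hpl)) (Or.inl ENNReal.ofReal_ne_top)] at hε1
    refine h1.le.trans ?_
    rw [← ENNReal.ofReal_coe_nnreal, ← ENNReal.ofReal_coe_nnreal (p := c2),
      ← ENNReal.ofReal_mul c1.coe_nonneg, ← ENNReal.ofReal_mul c2.coe_nonneg, e]
    refine ENNReal.ofReal_le_ofReal ?_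
    linarith
  exact liminf_le_of_frequently_le (ht.frequently key) (by isBoundedDefault)

end KV

/-- Theorem 3.3 (lower part): variational principles for the lower metric mean dimension in
terms of the lower and upper Katok entropies, over ergodic measures. -/
theorem stmt6 {X : Type*} [MetricSpace X] [CompactSpace X] [MeasurableSpace X] [BorelSpace X]
    (T : X → X) (hT : Continuous T) :
    mdimMLower T = Filter.liminf (fun ε : ℝ =>
        (⨆ (μ : Measure X) (_ : IsProbabilityMeasure μ) (_ : Ergodic T μ), katokLower T μ ε)
          / ENNReal.ofReal (Real.log (1 / ε))) (nhdsWithin 0 (Set.Ioi 0)) ∧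
    mdimMLower T = Filter.liminf (fun ε : ℝ =>
        (⨆ (μ : Measure X) (_ : IsProbabilityMeasure μ) (_ : Ergodic T μ), katokUpper T μ ε)
          / ENNReal.ofReal (Real.log (1 / ε))) (nhdsWithin 0 (Set.Ioi 0)) := by
  have hle := KV.liminf_shift (S := spanGrowth T) fun ε hε => KV.spanGrowth_le hT hε
  have hmono : Filter.liminf (fun ε : ℝ =>
        (⨆ (μ : Measure X) (_ : IsProbabilityMeasure μ) (_ : Ergodic T μ), katokLower T μ ε)
          / ENNReal.ofReal (Real.log (1 / ε))) (nhdsWithin 0 (Set.Ioi 0)) ≤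
      Filter.liminf (fun ε : ℝ =>
        (⨆ (μ : Measure X) (_ : IsProbabilityMeasure μ) (_ : Ergodic T μ), katokUpper T μ ε)
          / ENNReal.ofReal (Real.log (1 / ε))) (nhdsWithin 0 (Set.Ioi 0)) := by
    refine liminf_le_liminf (Eventually.of_forall fun ε => ?_)
    refine ENNReal.div_le_div_right ?_ _
    exact iSup_mono fun μ => iSup₂_mono fun _ _ => KV.katokLower_le T ε μ
  have hup : Filter.liminf (fun ε : ℝ =>
        (⨆ (μ : Measure X) (_ : IsProbabilityMeasure μ) (_ : Ergodic T μ), katokUpper T μ ε)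
          / ENNReal.ofReal (Real.log (1 / ε))) (nhdsWithin 0 (Set.Ioi 0)) ≤ mdimMLower T := by
    refine liminf_le_liminf ?_
    filter_upwards [self_mem_nhdsWithin] with ε hε
    refine ENNReal.div_le_div_right ?_ _
    exact iSup_le fun μ => iSup₂_le fun _ _ => KV.katokUpper_le T hε μ
  exact ⟨le_antisymm hle (hmono.trans hup), le_antisymm (hle.trans hmono) hup⟩
end
end

section
/- Let (X,T) be a topological dynamical system with a compatible metric d. Then mdim_M^+(T,X,d) = limsup_{ε→0} [ sup_{μ∈M(X,T)} ḥ^K_μ(T,ε) ] / log(1/ε) = limsup_{ε→0} [ sup_{μ∈M(X,T)} h̄^K_μ(T,ε) ] / log(1/ε), and mdim_M^-(T,X,d) = liminf_{ε→0} [ sup_{μ∈M(X,T)} ḥ^K_μ(T,ε) ] / log(1/ε) = liminf_{ε→0} [ sup_{μ∈M(X,T)} h̄^K_μ(T,ε) ] / log(1/ε), where the suprema are over all T-invariant Borel probability measures. -/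
open Filter MeasureTheory Set
open scoped ENNReal Topology

noncomputable section

open MMD

namespace MMDAux

variable {X : Type*}

lemma bowen_lt [PseudoMetricSpace X] (T : X → X) (n : ℕ) {ε : ℝ} (hε : 0 < ε) (x y : X) :
    bowenDist T n x y < ε ↔ ∀ j < n, dist (T^[j] x) (T^[j] y) < ε := by
  unfold bowenDist
  constructor
  · intro h j hj
    refine lt_of_le_of_lt ?_ h
    exact le_ciSup (f := fun j : Fin n => dist (T^[(j : ℕ)] x) (T^[(j : ℕ)] y))
      (Set.finite_range _).bddAbove ⟨j, hj⟩
  · intro h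
    rcases Nat.eq_zero_or_pos n with rfl | hn
    · simpa using hε
    · have : Nonempty (Fin n) := ⟨⟨0, hn⟩⟩
      obtain ⟨i, hi⟩ := exists_eq_ciSup_of_finite
        (f := fun j : Fin n => dist (T^[(j : ℕ)] x) (T^[(j : ℕ)] y))
      rw [← hi]
      exact h i i.2

/-- separated sets -/
def Sep [PseudoMetricSpace X] (T : X → X) (ε : ℝ) (n : ℕ) (F : Finset X) : Prop :=
  ∀ x ∈ F, ∀ y ∈ F, x ≠ y → ∃ j < n, ε ≤ dist (T^[j] x) (T^[j] y)

open Classical in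
lemma sep_push [PseudoMetricSpace X] (T : X → X) {ε : ℝ} {n k : ℕ} (hk : 0 < k) {G : Finset X}
    (hG : Sep T ε (k + n) G)
    (hc : ∀ x ∈ G, ∀ y ∈ G, ∀ j < k, dist (T^[j] x) (T^[j] y) < ε) :
    (G.image T^[k]).card = G.card ∧ Sep T ε n (G.image T^[k]) := by
  have key : ∀ x ∈ G, ∀ y ∈ G, x ≠ y →
      ∃ j < n, ε ≤ dist (T^[j] (T^[k] x)) (T^[j] (T^[k] y)) ∧ T^[k] x ≠ T^[k] y := by
    intro x hx y hy hxy
    obtain ⟨j, hj, hd⟩ := hG x hx y hy hxy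
    have hkj : k ≤ j := by
      by_contra hlt
      have := hc x hx y hy j (by omega)
      linarith
    have hpos : 0 < ε := by
      by_contra hneg
      have := hc x hx y hy 0 hk
      have := dist_nonneg (x := T^[0] x) (y := T^[0] y)
      linarith
    have hd' : ε ≤ dist (T^[j - k] (T^[k] x)) (T^[j - k] (T^[k] y)) := by
      rw [← Function.iterate_add_apply, ← Function.iterate_add_apply, Nat.sub_add_cancel hkj]
      exact hd
    refine ⟨j - k, by omega, hd', ?_⟩
    intro he
    rw [he, dist_self] at hd'
    linarith
  constructor
  · refine Finset.card_image_of_injOn ?_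
    intro x hx y hy he
    by_contra hne
    obtain ⟨_, _, _, h⟩ := key x hx y hy hne
    exact h he
  · intro x' hx' y' hy' hne
    obtain ⟨x, hx, rfl⟩ := Finset.mem_image.1 hx'
    obtain ⟨y, hy, rfl⟩ := Finset.mem_image.1 hy'
    obtain ⟨j, hj, h, _⟩ := key x hx y hy (fun h => hne (by rw [h]))
    exact ⟨j, hj, h⟩

open Classical in
lemma card_cover {F E : Finset X} {R : X → X → Prop} (h : ∀ x ∈ F, ∃ y ∈ E, R y x) {M : ℝ}
    (hM : ∀ y ∈ E, ((F.filter (R y)).card : ℝ) ≤ M) : (F.card : ℝ) ≤ E.card * M := by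
  have h1 : F ⊆ E.biUnion (fun y => F.filter (R y)) := by
    intro x hx
    obtain ⟨y, hy, hr⟩ := h x hx
    simp only [Finset.mem_biUnion, Finset.mem_filter]
    exact ⟨y, hy, hx, hr⟩
  calc (F.card : ℝ) ≤ ((E.biUnion (fun y => F.filter (R y))).card : ℝ) := by
        exact_mod_cast Finset.card_le_card h1
    _ ≤ ∑ y ∈ E, ((F.filter (R y)).card : ℝ) := by exact_mod_cast Finset.card_biUnion_le
    _ ≤ ∑ y ∈ E, M := Finset.sum_le_sum hM
    _ = _ := by simp

open Classical in
lemma sep_card [PseudoMetricSpace X] (T : X → X) {ε : ℝ} {C : Finset X}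
    (hC : ∀ x, ∃ c ∈ C, dist c x < ε / 2) (n : ℕ) :
    ∀ F : Finset X, Sep T ε n F → (F.card : ℝ) ≤ (C.card : ℝ) ^ n := by
  induction n with
  | zero =>
    intro F hF
    have : F.card ≤ 1 := by
      rw [Finset.card_le_one]
      intro a ha b hb
      by_contra hab
      obtain ⟨j, hj, _⟩ := hF a ha b hb hab
      omega
    simpa using this
  | succ n ih =>
    intro F hF
    rw [pow_succ']
    refine card_cover (R := fun c x => dist c x < ε / 2) (fun x _ => hC x) ?_
    intro y hy
    obtain ⟨h1, h2⟩ := sep_push T (ε := ε) (n := n) (k := 1) one_pos (G := F.filter (fun x => dist y x < ε / 2))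
      (by
        intro a ha b hb hab
        rw [add_comm 1 n]
        exact hF a (Finset.mem_filter.1 ha).1 b (Finset.mem_filter.1 hb).1 hab)
      (by
        intro a ha b hb j hj
        obtain rfl : j = 0 := by omega
        have h1 := (Finset.mem_filter.1 ha).2
        have h2 := (Finset.mem_filter.1 hb).2
        have := dist_triangle_left a b y
        simp only [Function.iterate_zero, id]
        linarith)
    rw [← h1]
    exact ih _ h2

open Classical in
/-- number of visits outside `U`. -/
def bad (T : X → X) (U : Set X) (n : ℕ) (x : X) : ℕ :=
  ((Finset.range n).filter (fun j => T^[j] x ∉ U)).card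

lemma bad_eq_sum (T : X → X) (U : Set X) (n : ℕ) (x : X) :
    (bad T U n x : ℝ) = ∑ j ∈ Finset.range n, Uᶜ.indicator (fun _ => (1:ℝ)) (T^[j] x) := by
  classical
  simp [bad, Finset.card_filter, Set.indicator_apply]

lemma bad_add (T : X → X) (U : Set X) (k n : ℕ) (x : X) :
    bad T U (k + n) x = bad T U k x + bad T U n (T^[k] x) := by
  classical
  simp only [bad, Finset.card_filter]
  rw [Finset.sum_range_add]
  congr 1
  refine Finset.sum_congr rfl fun j _ => ?_
  rw [← Function.iterate_add_apply, add_comm k j]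

lemma bad_one (T : X → X) (U : Set X) (x : X) (hx : x ∉ U) : bad T U 1 x = 1 := by
  classical
  simp [bad, Finset.card_filter, hx]

open Classical in
lemma count [PseudoMetricSpace X] (T : X → X) {ε : ℝ} {C E : Finset X} {U : Set X} {m : ℕ}
    (hm : 0 < m)
    (hC : ∀ x, ∃ c ∈ C, dist c x < ε / 2)
    (hCne : 1 ≤ C.card)
    (hE : ∀ x ∈ U, ∃ y ∈ E, ∀ j < m, dist (T^[j] y) (T^[j] x) < ε / 2)
    {α β : ℝ} (hα : 1 ≤ α) (hβ : 1 ≤ β) (hEα : (E.card : ℝ) * 2 ≤ α ^ m)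
    (hCβ : (C.card : ℝ) * 2 ≤ β) (n : ℕ) :
    ∀ b : ℕ, ∀ F : Finset X, Sep T ε n F → (∀ x ∈ F, bad T U n x ≤ b) →
      (F.card : ℝ) ≤ (C.card : ℝ) ^ m * α ^ n * β ^ b := by
  have hC1 : (1:ℝ) ≤ C.card := by exact_mod_cast hCne
  induction n using Nat.strong_induction_on with
  | _ n ih =>
  intro b F hF hb
  by_cases hnm : n < m
  · have h1 := sep_card T hC n F hF
    have h2 : (C.card : ℝ) ^ n ≤ (C.card : ℝ) ^ m := pow_le_pow_right₀ hC1 hnm.le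
    have h3 : (1:ℝ) ≤ α ^ n := one_le_pow₀ hα
    have h4 : (1:ℝ) ≤ β ^ b := one_le_pow₀ hβ
    have h5 : (0:ℝ) ≤ (C.card : ℝ) ^ m := by positivity
    calc (F.card : ℝ) ≤ (C.card : ℝ) ^ m := h1.trans h2
      _ ≤ (C.card : ℝ) ^ m * α ^ n := le_mul_of_one_le_right h5 h3
      _ ≤ _ := le_mul_of_one_le_right (by positivity) h4
  · push Not at hnm
    have hsplit : (F.card : ℝ) = ((F.filter (· ∈ U)).card : ℝ) + ((F.filter (· ∉ U)).card : ℝ) := by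
      exact_mod_cast (Finset.card_filter_add_card_filter_not (s := F) (· ∈ U)).symm
    have hA : ((F.filter (· ∈ U)).card : ℝ) ≤ E.card * ((C.card : ℝ) ^ m * α ^ (n - m) * β ^ b) := by
      refine card_cover (R := fun y x => ∀ j < m, dist (T^[j] y) (T^[j] x) < ε / 2) ?_ ?_
      · intro x hx
        exact hE x (Finset.mem_filter.1 hx).2
      · intro y hy
        set G := (F.filter (· ∈ U)).filter (fun x => ∀ j < m, dist (T^[j] y) (T^[j] x) < ε / 2) with hG
        have hGF : ∀ x ∈ G, x ∈ F := fun x hx => (Finset.mem_filter.1 (Finset.mem_filter.1 hx).1).1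
        obtain ⟨h1, h2⟩ := sep_push T (ε := ε) (n := n - m) (k := m) hm (G := G)
          (by
            intro a ha b hb hab
            rw [Nat.add_sub_cancel' hnm]
            exact hF a (hGF a ha) b (hGF b hb) hab)
          (by
            intro a ha b hb j hj
            have h1 := (Finset.mem_filter.1 ha).2 j hj
            have h2 := (Finset.mem_filter.1 hb).2 j hj
            have := dist_triangle_left (T^[j] a) (T^[j] b) (T^[j] y)
            linarith)
        have hcv : ∀ (D : DecidablePred fun x => ∀ j < m, dist (T^[j] y) (T^[j] x) < ε / 2),
            (@Finset.filter X (fun x => ∀ j < m, dist (T^[j] y) (T^[j] x) < ε / 2) D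
              (F.filter (· ∈ U))).card = G.card := by
          intro D
          rw [hG]
          congr!
        rw [hcv, ← h1]
        refine ih (n - m) (by omega) b _ h2 ?_
        intro z hz
        obtain ⟨x, hx, rfl⟩ := Finset.mem_image.1 hz
        have := bad_add T U m (n - m) x
        rw [Nat.add_sub_cancel' hnm] at this
        have := hb x (hGF x hx)
        omega
    have hB : ((F.filter (· ∉ U)).card : ℝ) * 2 ≤ (C.card : ℝ) ^ m * α ^ n * β ^ b := by
      rcases (F.filter (· ∉ U)).eq_empty_or_nonempty with h0 | ⟨x0, hx0⟩
      · rw [h0]; simp; positivity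
      have hn : 1 + (n - 1) = n := by omega
      have hbad : ∀ x ∈ F.filter (· ∉ U), 1 + bad T U (n - 1) (T^[1] x) ≤ b := by
        intro x hx
        have h1 := bad_add T U 1 (n - 1) x
        rw [hn, bad_one T U x (Finset.mem_filter.1 hx).2] at h1
        have := hb x (Finset.mem_filter.1 hx).1
        omega
      have hb1 : 1 ≤ b := by have := hbad x0 hx0; omega
      have hB' : ((F.filter (· ∉ U)).card : ℝ) ≤
          C.card * ((C.card : ℝ) ^ m * α ^ (n - 1) * β ^ (b - 1)) := by
        refine card_cover (R := fun y x => dist y x < ε / 2) (fun x _ => hC x) ?_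
        intro y hy
        set G := (F.filter (· ∉ U)).filter (fun x => dist y x < ε / 2) with hG
        have hGF : ∀ x ∈ G, x ∈ F := fun x hx => (Finset.mem_filter.1 (Finset.mem_filter.1 hx).1).1
        obtain ⟨h1, h2⟩ := sep_push T (ε := ε) (n := n - 1) (k := 1) one_pos (G := G)
          (by
            intro a ha b hb hab
            rw [hn]
            exact hF a (hGF a ha) b (hGF b hb) hab)
          (by
            intro a ha b hb j hj
            obtain rfl : j = 0 := by omega
            have h1 := (Finset.mem_filter.1 ha).2
            have h2 := (Finset.mem_filter.1 hb).2
            have := dist_triangle_left a b y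
            simp only [Function.iterate_zero, id]
            linarith)
        rw [← h1]
        refine ih (n - 1) (by omega) (b - 1) _ h2 ?_
        intro z hz
        obtain ⟨x, hx, rfl⟩ := Finset.mem_image.1 hz
        have := hbad x (Finset.mem_filter.1 hx).1
        omega
      have e1 : α ^ (n - 1) ≤ α ^ n := pow_le_pow_right₀ hα (by omega)
      have e2 : β ^ b = β * β ^ (b - 1) := by rw [← pow_succ']; congr 1; omega
      calc ((F.filter (· ∉ U)).card : ℝ) * 2
          ≤ C.card * ((C.card : ℝ) ^ m * α ^ (n - 1) * β ^ (b - 1)) * 2 := by gcongr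
        _ = (C.card * 2) * ((C.card : ℝ) ^ m * α ^ (n - 1) * β ^ (b - 1)) := by ring
        _ ≤ β * ((C.card : ℝ) ^ m * α ^ n * β ^ (b - 1)) := by gcongr
        _ = _ := by rw [e2]; ring
    have hA2 : ((F.filter (· ∈ U)).card : ℝ) * 2 ≤ (C.card : ℝ) ^ m * α ^ n * β ^ b := by
      have e3 : α ^ n = α ^ m * α ^ (n - m) := by rw [← pow_add]; congr 1; omega
      calc ((F.filter (· ∈ U)).card : ℝ) * 2
          ≤ E.card * ((C.card : ℝ) ^ m * α ^ (n - m) * β ^ b) * 2 := by gcongr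
        _ = (E.card * 2) * ((C.card : ℝ) ^ m * α ^ (n - m) * β ^ b) := by ring
        _ ≤ α ^ m * ((C.card : ℝ) ^ m * α ^ (n - m) * β ^ b) := by gcongr
        _ = _ := by rw [e3]; ring
    linarith

open Classical in
lemma markov (T : X → X) (U : Set X) (n : ℕ) (F : Finset X) {δ : ℝ} (hδ : 0 < δ) (hn : 0 < n)
    (hs : ∑ x ∈ F, (bad T U n x : ℝ) ≤ δ * (F.card * n)) :
    (F.card : ℝ) ≤ 2 * ((F.filter (fun x => bad T U n x ≤ ⌊2 * δ * n⌋₊)).card : ℝ) := by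
  have hn' : (0:ℝ) < n := by exact_mod_cast hn
  set P := fun x => bad T U n x ≤ ⌊2 * δ * n⌋₊ with hP
  have hsplit : (F.card : ℝ) = ((F.filter P).card : ℝ) + ((F.filter (fun x => ¬ P x)).card : ℝ) := by
    exact_mod_cast (Finset.card_filter_add_card_filter_not (s := F) P).symm
  have h1 : ((F.filter (fun x => ¬ P x)).card : ℝ) * (2 * δ * n) ≤ ∑ x ∈ F, (bad T U n x : ℝ) := by
    calc ((F.filter (fun x => ¬ P x)).card : ℝ) * (2 * δ * n)
        = ∑ x ∈ F.filter (fun x => ¬ P x), (2 * δ * n) := by simp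
      _ ≤ ∑ x ∈ F.filter (fun x => ¬ P x), (bad T U n x : ℝ) := by
          refine Finset.sum_le_sum fun x hx => ?_
          have := (Finset.mem_filter.1 hx).2
          simp only [hP, not_le] at this
          exact (Nat.lt_of_floor_lt this).le
      _ ≤ _ := Finset.sum_le_sum_of_subset_of_nonneg (Finset.filter_subset _ _)
          (fun _ _ _ => by positivity)
  have h2 : ((F.filter (fun x => ¬ P x)).card : ℝ) * 2 * (δ * n) ≤ F.card * (δ * n) := by linarith
  have h3 := le_of_mul_le_mul_right h2 (by positivity)
  linarith

/-- The quantitative bound. -/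
lemma log_bound [PseudoMetricSpace X] (T : X → X) {ε : ℝ} {C E F : Finset X} {U : Set X} {m n : ℕ}
    (hm : 0 < m) (hn : 0 < n)
    (hC : ∀ x, ∃ c ∈ C, dist c x < ε / 2)
    (hCne : 1 ≤ C.card) (hEne : 1 ≤ E.card) (hFne : 1 ≤ F.card)
    (hE : ∀ x ∈ U, ∃ y ∈ E, ∀ j < m, dist (T^[j] y) (T^[j] x) < ε / 2)
    (hF : Sep T ε n F) {δ : ℝ} (hδ : 0 < δ)
    (hs : ∑ x ∈ F, (bad T U n x : ℝ) ≤ δ * (F.card * n)) :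
    Real.log F.card ≤ Real.log 2 + m * Real.log C.card +
      n * ((Real.log 2 + Real.log E.card) / m + 2 * δ * Real.log (2 * C.card)) := by
  classical
  have hC1 : (1:ℝ) ≤ C.card := by exact_mod_cast hCne
  have hE1 : (1:ℝ) ≤ E.card := by exact_mod_cast hEne
  have hF1 : (1:ℝ) ≤ F.card := by exact_mod_cast hFne
  have hm' : (0:ℝ) < m := by exact_mod_cast hm
  set α : ℝ := (2 * E.card : ℝ) ^ ((m : ℝ)⁻¹) with hα
  have hαm : α ^ m = 2 * E.card := Real.rpow_inv_natCast_pow (by positivity) hm.ne'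
  have hα1 : 1 ≤ α := Real.one_le_rpow (by linarith) (by positivity)
  have hmk := markov T U n F hδ hn hs
  have hct := count T hm hC hCne hE (α := α) (β := 2 * C.card) hα1 (by linarith)
    (by rw [hαm]; linarith) (by linarith) n ⌊2 * δ * n⌋₊
    (F.filter (fun x => bad T U n x ≤ ⌊2 * δ * n⌋₊))
    (fun a ha b hb => hF a (Finset.mem_filter.1 ha).1 b (Finset.mem_filter.1 hb).1)
    (fun x hx => (Finset.mem_filter.1 hx).2)
  have h1 : (F.card : ℝ) ≤ 2 * ((C.card : ℝ) ^ m * α ^ n * (2 * C.card) ^ ⌊2 * δ * n⌋₊) := by linarith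
  have h2 := Real.log_le_log (by linarith) h1
  have hα0 : 0 < α := by linarith
  have hlα : Real.log α = (Real.log 2 + Real.log E.card) / m := by
    rw [hα, Real.log_rpow (by positivity), Real.log_mul (by norm_num) (by positivity)]
    field_simp
  rw [Real.log_mul (by norm_num) (by positivity), Real.log_mul (by positivity) (by positivity),
    Real.log_mul (by positivity) (by positivity), Real.log_pow, Real.log_pow, Real.log_pow, hlα] at h2
  have h3 : (⌊2 * δ * n⌋₊ : ℝ) * Real.log (2 * C.card) ≤ 2 * δ * n * Real.log (2 * C.card) := by
    gcongr
    · exact Real.log_nonneg (by linarith)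
    · exact Nat.floor_le (by positivity)
  linarith


/-- averaged empirical measure -/
def avg [MeasurableSpace X] (T : X → X) (n : ℕ) (F : Finset X) : Measure X :=
  ((F.card * n : ℝ≥0∞))⁻¹ • ∑ x ∈ F, ∑ j ∈ Finset.range n, Measure.dirac (T^[j] x)

lemma avg_prob [MeasurableSpace X] (T : X → X) {n : ℕ} (hn : 0 < n) {F : Finset X}
    (hF : 1 ≤ F.card) : IsProbabilityMeasure (avg T n F) := by
  constructor
  have h1 : (F.card : ℝ≥0∞) * n ≠ 0 := by
    have : F.card * n ≠ 0 := by positivity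
    exact_mod_cast this
  have h2 : (F.card : ℝ≥0∞) * n ≠ ∞ := by
    exact ENNReal.mul_ne_top (ENNReal.natCast_ne_top _) (ENNReal.natCast_ne_top _)
  simp only [avg, Measure.smul_apply, Measure.finsetSum_apply, smul_eq_mul]
  simp only [measure_univ, Finset.sum_const, Finset.card_range, nsmul_eq_mul, mul_one]
  exact ENNReal.inv_mul_cancel h1 h2

lemma avg_integral [MeasurableSpace X] [MeasurableSingletonClass X] (T : X → X) (n : ℕ)
    (F : Finset X) (f : X → ℝ) :
    ∫ x, f x ∂(avg T n F) = ((F.card * n : ℝ))⁻¹ * ∑ x ∈ F, ∑ j ∈ Finset.range n, f (T^[j] x) := by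
  have hi : ∀ a : X, Integrable f (Measure.dirac a) := fun a => by
    apply integrable_dirac
    exact enorm_lt_top
  rw [avg, integral_smul_measure, integral_finsetSum_measure]
  · congr 1
    · simp
    · refine Finset.sum_congr rfl fun x _ => ?_
      rw [integral_finsetSum_measure]
      · refine Finset.sum_congr rfl fun j _ => ?_
        rw [integral_dirac]
      · exact fun j _ => hi _
  · intro x _
    rw [integrable_finsetSum_measure]
    exact fun j _ => hi _

lemma exists_net [PseudoMetricSpace X] [CompactSpace X] {T : X → X} (hT : Continuous T) (n : ℕ)
    {ε : ℝ} (hε : 0 < ε) : ∃ C : Finset X, ∀ x, ∃ c ∈ C, ∀ j < n, dist (T^[j] c) (T^[j] x) < ε := by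
  have hopen : ∀ c : X, IsOpen {x | ∀ j < n, dist (T^[j] c) (T^[j] x) < ε} := by
    intro c
    have : {x | ∀ j < n, dist (T^[j] c) (T^[j] x) < ε} =
        ⋂ j ∈ Finset.range n, {x | dist (T^[j] c) (T^[j] x) < ε} := by
      ext x; simp
    rw [this]
    refine isOpen_biInter_finset fun j _ => ?_
    exact isOpen_lt (continuous_const.dist (hT.iterate j)) continuous_const
  obtain ⟨C, hC⟩ := isCompact_univ.elim_finite_subcover _ hopen (by
    intro x _
    refine Set.mem_iUnion.2 ⟨x, ?_⟩
    intro j _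
    simpa using hε)
  refine ⟨C, fun x => ?_⟩
  have := hC (Set.mem_univ x)
  simp only [Set.mem_iUnion] at this
  obtain ⟨c, hc, h⟩ := this
  exact ⟨c, hc, h⟩

lemma isOpen_bowen [PseudoMetricSpace X] {T : X → X} (hT : Continuous T) (n : ℕ)
    {ε : ℝ} (hε : 0 < ε) (E : Finset X) : IsOpen (⋃ x ∈ E, {y | bowenDist T n x y < ε}) := by
  refine isOpen_biUnion fun c _ => ?_
  have : {x | bowenDist T n c x < ε} =
      ⋂ j ∈ Finset.range n, {x | dist (T^[j] c) (T^[j] x) < ε} := by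
    ext x; simp [bowen_lt T n hε]
  rw [this]
  refine isOpen_biInter_finset fun j _ => ?_
  exact isOpen_lt (continuous_const.dist (hT.iterate j)) continuous_const

lemma exists_sep [PseudoMetricSpace X] [CompactSpace X] {T : X → X} (hT : Continuous T) (n : ℕ)
    {ε : ℝ} (hε : 0 < ε) : ∃ F : Finset X, Sep T ε n F ∧ spanNum T n ε Set.univ ≤ F.card := by
  classical
  obtain ⟨C, hC⟩ := exists_net hT 1 (half_pos hε)
  have hC' : ∀ x, ∃ c ∈ C, dist c x < ε / 2 := fun x => by
    obtain ⟨c, hc, h⟩ := hC x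
    exact ⟨c, hc, h 0 one_pos⟩
  have hbdd : BddAbove {k | ∃ F : Finset X, Sep T ε n F ∧ F.card = k} := by
    refine ⟨C.card ^ n, ?_⟩
    rintro k ⟨F, hF, rfl⟩
    exact_mod_cast sep_card T hC' n F hF
  obtain ⟨F, hF, hk⟩ := Nat.sSup_mem (s := {k | ∃ F : Finset X, Sep T ε n F ∧ F.card = k})
    ⟨0, ∅, by simp [Sep], rfl⟩ hbdd
  refine ⟨F, hF, ?_⟩
  refine Nat.sInf_le ⟨F, rfl, ?_⟩
  intro z _
  by_contra hcon
  push Not at hcon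
  have hcon' : ∀ y ∈ F, ∃ j < n, ε ≤ dist (T^[j] z) (T^[j] y) := by
    intro y hy
    by_contra h
    push Not at h
    exact absurd ((bowen_lt T n hε z y).2 h) (not_lt.2 (hcon y hy))
  by_cases hz : z ∈ F
  · obtain ⟨j, _, h⟩ := hcon' z hz
    rw [dist_self] at h
    linarith
  have hins : Sep T ε n (insert z F) := by
    intro x hx y hy hxy
    rcases Finset.mem_insert.1 hx with hx1 | hx1
    · rcases Finset.mem_insert.1 hy with hy1 | hy1
      · exact absurd (hx1.trans hy1.symm) hxy
      · rw [hx1]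
        exact hcon' y hy1
    · rcases Finset.mem_insert.1 hy with hy1 | hy1
      · obtain ⟨j, hj, h⟩ := hcon' x hx1
        exact ⟨j, hj, by rwa [hy1, dist_comm]⟩
      · exact hF x hx1 y hy1 hxy
  have := le_csSup hbdd ⟨_, hins, rfl⟩
  rw [← hk, Finset.card_insert_of_notMem hz] at this
  omega

/-- the maximal separated sets -/
lemma inv_limit [MetricSpace X] [CompactSpace X] [MeasurableSpace X] [BorelSpace X]
    {T : X → X} (hT : Continuous T) (F : ℕ → Finset X) (𝓤 : Ultrafilter ℕ)
    (h𝓤 : (𝓤 : Filter ℕ) ≤ atTop) (hF : ∀ᶠ n in (𝓤 : Filter ℕ), 1 ≤ (F n).card) :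
    ∃ μ : Measure X, IsProbabilityMeasure μ ∧ MeasurePreserving T μ μ ∧
      ∀ U : Set X, IsOpen U → ∀ δ : ℝ, 0 < δ → ENNReal.ofReal (1 - δ) < μ U →
        ∀ᶠ n in (𝓤 : Filter ℕ), ∑ x ∈ F n, (bad T U n x : ℝ) ≤ δ * ((F n).card * n) := by
  classical
  have hpos : ∀ᶠ n in (𝓤 : Filter ℕ), 0 < n := h𝓤 (eventually_gt_atTop 0)
  have hX : Nonempty X := by
    obtain ⟨n, hn⟩ := hF.exists
    exact ⟨(Finset.card_pos.1 hn).choose⟩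
  let x0 : X := hX.some
  have hex : ∀ n, ∃ p : ProbabilityMeasure X, 0 < n → 1 ≤ (F n).card →
      (p : Measure X) = avg T n (F n) := by
    intro n
    by_cases h : 0 < n ∧ 1 ≤ (F n).card
    · exact ⟨⟨avg T n (F n), avg_prob T h.1 h.2⟩, fun _ _ => rfl⟩
    · exact ⟨⟨Measure.dirac x0, inferInstance⟩, fun h1 h2 => absurd ⟨h1, h2⟩ h⟩
  choose ν hν0 using hex
  have hν : ∀ᶠ n in (𝓤 : Filter ℕ), (ν n : Measure X) = avg T n (F n) := by
    filter_upwards [hF, hpos] with n h1 h2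
    exact hν0 n h2 h1
  obtain ⟨μ, -, hμ⟩ := isCompact_univ.ultrafilter_le_nhds (𝓤.map ν) (by simp)
  have hlim : Tendsto ν 𝓤 (𝓝 μ) := hμ
  refine ⟨μ, inferInstance, ?_, ?_⟩
  · have h1 : Tendsto (fun n => (ν n).map hT.measurable.aemeasurable) 𝓤
        (𝓝 (μ.map hT.measurable.aemeasurable)) :=
      ProbabilityMeasure.tendsto_map_of_tendsto_of_continuous ν μ hlim hT
    have h2 : Tendsto (fun n => (ν n).map hT.measurable.aemeasurable) 𝓤 (𝓝 μ) := by
      rw [ProbabilityMeasure.tendsto_iff_forall_integral_tendsto]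
      intro f
      have h3 := (ProbabilityMeasure.tendsto_iff_forall_integral_tendsto.1 hlim) f
      have h4 : Tendsto (fun n => ∫ x, f x ∂((ν n).map hT.measurable.aemeasurable : Measure X)
          - ∫ x, f x ∂(ν n : Measure X)) 𝓤 (𝓝 0) := by
        have h5 : Tendsto (fun n : ℕ => 2 * ‖f‖ / (n : ℝ)) 𝓤 (𝓝 0) :=
          (tendsto_const_div_atTop_nhds_zero_nat _).mono_left h𝓤
        refine squeeze_zero_norm' ?_ h5
        filter_upwards [hν, hF, hpos] with n hn hFn hn0
        rw [ProbabilityMeasure.toMeasure_map, integral_map hT.measurable.aemeasurable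
          f.continuous.aestronglyMeasurable, hn, avg_integral, avg_integral, ← mul_sub,
          ← Finset.sum_sub_distrib]
        have h6 : ∀ x ∈ F n, ‖∑ j ∈ Finset.range n, f (T (T^[j] x)) -
            ∑ j ∈ Finset.range n, f (T^[j] x)‖ ≤ 2 * ‖f‖ := by
          intro x _
          rw [← Finset.sum_sub_distrib]
          have : ∀ j, f (T (T^[j] x)) = f (T^[j + 1] x) := fun j => by
            rw [Function.iterate_succ_apply']
          simp only [this]
          rw [Finset.sum_range_sub (fun j => f (T^[j] x))]
          calc ‖f (T^[n] x) - f (T^[0] x)‖ ≤ ‖f (T^[n] x)‖ + ‖f (T^[0] x)‖ := norm_sub_le _ _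
            _ ≤ ‖f‖ + ‖f‖ := add_le_add (f.norm_coe_le_norm _) (f.norm_coe_le_norm _)
            _ = _ := by ring
        have h7 : (0:ℝ) < (F n).card := by exact_mod_cast hFn
        have h8 : (0:ℝ) < n := by exact_mod_cast hn0
        rw [norm_mul, norm_inv, Real.norm_of_nonneg (by positivity)]
        calc _ ≤ (((F n).card : ℝ) * n)⁻¹ * ∑ x ∈ F n, (2 * ‖f‖) := by
              gcongr
              exact (norm_sum_le _ _).trans (Finset.sum_le_sum h6)
          _ = 2 * ‖f‖ / n := by
              rw [Finset.sum_const, nsmul_eq_mul]; field_simp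
      simpa using h4.add h3
    have h3 := tendsto_nhds_unique h1 h2
    refine ⟨hT.measurable, ?_⟩
    have := congrArg (fun p : ProbabilityMeasure X => (p : Measure X)) h3
    simpa using this
  · intro U hU δ hδ hμU
    have hc : (μ : Measure X) Uᶜ < ENNReal.ofReal δ := by
      rw [prob_compl_eq_one_sub hU.measurableSet]
      rw [ENNReal.ofReal_sub _ hδ.le, ENNReal.ofReal_one] at hμU
      refine ENNReal.sub_lt_of_lt_add prob_le_one ?_
      rw [add_comm]
      by_contra hle
      exact absurd hμU (not_lt.2 (ENNReal.le_sub_of_add_le_right (by simp) (not_lt.1 hle)))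
    have hls := ProbabilityMeasure.limsup_measure_closed_le_of_tendsto hlim hU.isClosed_compl
    have hev := eventually_lt_of_limsup_lt (hls.trans_lt hc)
    filter_upwards [hev, hν, hF, hpos] with n h1 h2 hFn hn0
    rw [h2] at h1
    have h7 : (0:ℝ) < (F n).card := by exact_mod_cast hFn
    have h8 : (0:ℝ) < n := by exact_mod_cast hn0
    have h3 : (avg T n (F n)).real Uᶜ ≤ δ := by
      exact ENNReal.toReal_le_of_le_ofReal hδ.le h1.le
    have h4 := avg_integral T n (F n) (Uᶜ.indicator (fun _ => (1:ℝ)))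
    rw [integral_indicator_const _ hU.measurableSet.compl] at h4
    simp only [← bad_eq_sum, smul_eq_mul, mul_one] at h4
    rw [h4, inv_mul_le_iff₀ (by positivity)] at h3
    linarith

lemma katok_mem [PseudoMetricSpace X] [CompactSpace X] [MeasurableSpace X]
    {T : X → X} (hT : Continuous T) (μ : Measure X) [IsProbabilityMeasure μ] (n : ℕ) {ε δ : ℝ}
    (hε : 0 < ε) (hδ : 0 < δ) :
    ∃ E : Finset X, E.card = katokNum T μ n ε δ ∧
      ENNReal.ofReal (1 - δ) < μ (⋃ x ∈ E, {y | bowenDist T n x y < ε}) := by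
  obtain ⟨C, hC⟩ := exists_net hT n hε
  have : (⋃ x ∈ C, {y | bowenDist T n x y < ε}) = Set.univ := by
    refine Set.eq_univ_of_forall fun x => ?_
    obtain ⟨c, hc, h⟩ := hC x
    exact Set.mem_biUnion hc ((bowen_lt T n hε c x).2 h)
  exact Nat.sInf_mem (s := {k | ∃ E : Finset X, E.card = k ∧
    ENNReal.ofReal (1 - δ) < μ (⋃ x ∈ E, {y | bowenDist T n x y < ε})})
    ⟨C.card, C, rfl, by
      rw [this, measure_univ, ← ENNReal.ofReal_one]
      exact (ENNReal.ofReal_lt_ofReal_iff one_pos).2 (by linarith)⟩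

lemma katok_pos [PseudoMetricSpace X] [CompactSpace X] [MeasurableSpace X]
    {T : X → X} (hT : Continuous T) (μ : Measure X) [IsProbabilityMeasure μ] (n : ℕ) {ε δ : ℝ}
    (hε : 0 < ε) (hδ : 0 < δ) : 1 ≤ katokNum T μ n ε δ := by
  obtain ⟨E, h1, h2⟩ := katok_mem hT μ n hε hδ
  rw [← h1]
  by_contra h
  have : E = ∅ := Finset.card_eq_zero.1 (by omega)
  subst this
  simp at h2

lemma katok_le_span [PseudoMetricSpace X] [CompactSpace X] [MeasurableSpace X]
    {T : X → X} (hT : Continuous T) (μ : Measure X) [IsProbabilityMeasure μ] (n : ℕ) {ε δ : ℝ}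
    (hε : 0 < ε) (hδ : 0 < δ) : katokNum T μ n ε δ ≤ spanNum T n ε Set.univ := by
  obtain ⟨C, hC⟩ := exists_net hT n hε
  have hne : {k | ∃ E : Finset X, E.card = k ∧ ∀ z ∈ (Set.univ : Set X), ∃ y ∈ E,
      bowenDist T n z y < ε}.Nonempty := by
    refine ⟨C.card, C, rfl, fun z _ => ?_⟩
    obtain ⟨c, hc, h⟩ := hC z
    exact ⟨c, hc, (bowen_lt T n hε z c).2 fun j hj => by rw [dist_comm]; exact h j hj⟩
  obtain ⟨E, h1, h2⟩ := Nat.sInf_mem hne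
  unfold spanNum
  rw [← h1]
  refine Nat.sInf_le ⟨E, rfl, ?_⟩
  have : (⋃ x ∈ E, {y | bowenDist T n x y < ε}) = Set.univ := by
    refine Set.eq_univ_of_forall fun x => ?_
    obtain ⟨c, hc, h⟩ := h2 x trivial
    refine Set.mem_biUnion hc ((bowen_lt T n hε c x).2 fun j hj => ?_)
    rw [dist_comm]
    exact (bowen_lt T n hε x c).1 h j hj
  rw [this, measure_univ, ← ENNReal.ofReal_one]
  exact (ENNReal.ofReal_lt_ofReal_iff one_pos).2 (by linarith)

lemma upper_le [PseudoMetricSpace X] [CompactSpace X] [MeasurableSpace X]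
    {T : X → X} (hT : Continuous T) (μ : Measure X) [IsProbabilityMeasure μ] {ε : ℝ}
    (hε : 0 < ε) : katokUpper T μ ε ≤ spanGrowth T ε := by
  refine iSup₂_le fun δ hδ => ?_
  refine limsup_le_limsup (Eventually.of_forall fun n => ?_)
  refine ENNReal.div_le_div_right (ENNReal.ofReal_le_ofReal ?_) _
  have h1 := katok_pos hT μ n hε hδ.1
  exact Real.log_le_log (by exact_mod_cast h1) (by exact_mod_cast katok_le_span hT μ n hε hδ.1)

lemma lower_le_upper [PseudoMetricSpace X] [MeasurableSpace X]
    (T : X → X) (μ : Measure X) (ε : ℝ) : katokLower T μ ε ≤ katokUpper T μ ε :=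
  iSup₂_mono fun _ _ => liminf_le_limsup

lemma key [MetricSpace X] [CompactSpace X] [MeasurableSpace X] [BorelSpace X]
    {T : X → X} (hT : Continuous T) {ε : ℝ} (hε : 0 < ε) (c : NNReal)
    (hc : (c : ℝ≥0∞) < spanGrowth T ε) :
    ∃ μ : Measure X, IsProbabilityMeasure μ ∧ MeasurePreserving T μ μ ∧
      (c : ℝ≥0∞) ≤ katokLower T μ (ε / 2) := by
  have hε2 := half_pos hε
  choose F hFsep hFspan using fun n => exists_sep hT n hε
  have hfreq : ∃ᶠ n in atTop, (c : ℝ≥0∞) <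
      ENNReal.ofReal (Real.log (spanNum T n ε Set.univ)) / (n : ℝ≥0∞) :=
    frequently_lt_of_lt_limsup (h := hc)
  have hne : (atTop ⊓ 𝓟 {n : ℕ | (c : ℝ≥0∞) <
      ENNReal.ofReal (Real.log (spanNum T n ε Set.univ)) / (n : ℝ≥0∞)}).NeBot :=
    frequently_mem_iff_neBot.1 hfreq
  let 𝓤 : Ultrafilter ℕ := Ultrafilter.of (atTop ⊓ 𝓟 {n : ℕ | (c : ℝ≥0∞) <
      ENNReal.ofReal (Real.log (spanNum T n ε Set.univ)) / (n : ℝ≥0∞)})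
  have h𝓤 := Ultrafilter.of_le (atTop ⊓ 𝓟 {n : ℕ | (c : ℝ≥0∞) <
      ENNReal.ofReal (Real.log (spanNum T n ε Set.univ)) / (n : ℝ≥0∞)})
  have h𝓤top : (𝓤 : Filter ℕ) ≤ atTop := h𝓤.trans inf_le_left
  have hpos : ∀ᶠ n in (𝓤 : Filter ℕ), 0 < n := h𝓤top (eventually_gt_atTop 0)
  have hlt : ∀ᶠ n in (𝓤 : Filter ℕ), (c : ℝ≥0∞) <
      ENNReal.ofReal (Real.log (spanNum T n ε Set.univ)) / (n : ℝ≥0∞) :=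
    (h𝓤.trans inf_le_right) (mem_principal_self _)
  have hlt' : ∀ᶠ n in (𝓤 : Filter ℕ), 1 ≤ (F n).card ∧ (c : ℝ) * n < Real.log (F n).card := by
    filter_upwards [hlt, hpos] with n h hn
    have hn' : (0:ℝ) < n := by exact_mod_cast hn
    rw [← ENNReal.ofReal_natCast, ← ENNReal.ofReal_div_of_pos hn', ← ENNReal.ofReal_coe_nnreal,
      ENNReal.ofReal_lt_ofReal_iff_of_nonneg c.coe_nonneg, lt_div_iff₀ hn'] at h
    have h0 : 0 < Real.log (spanNum T n ε Set.univ) := lt_of_le_of_lt (by positivity) h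
    have h1 : spanNum T n ε Set.univ ≠ 0 := by
      intro h2
      rw [h2] at h0
      simp at h0
    have h3 : 1 ≤ spanNum T n ε Set.univ := by omega
    refine ⟨h3.trans (hFspan n), h.trans_le ?_⟩
    exact Real.log_le_log (by exact_mod_cast h3) (by exact_mod_cast hFspan n)
  obtain ⟨μ, hμ, hinv, hU⟩ := inv_limit hT F 𝓤 h𝓤top (hlt'.mono fun n h => h.1)
  refine ⟨μ, hμ, hinv, ?_⟩
  obtain ⟨C, hC0⟩ := exists_net hT 1 hε2
  have hC : ∀ x, ∃ c ∈ C, dist c x < ε / 2 := fun x => by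
    obtain ⟨c, hc, h⟩ := hC0 x
    exact ⟨c, hc, h 0 one_pos⟩
  have hCne : 1 ≤ C.card := by
    obtain ⟨n, hn⟩ := hlt'.exists
    obtain ⟨x, _⟩ := Finset.card_pos.1 hn.1
    obtain ⟨c, hc, _⟩ := hC x
    exact Finset.card_pos.2 ⟨c, hc⟩
  set L := Real.log (2 * C.card) with hL
  have hL0 : 0 ≤ L := by
    refine Real.log_nonneg ?_
    have : (1:ℝ) ≤ C.card := by exact_mod_cast hCne
    linarith
  have main : ∀ δ : ℝ, 0 < δ → ∀ m : ℕ, 0 < m →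
      (c : ℝ) ≤ (Real.log 2 + Real.log (katokNum T μ m (ε / 2) δ)) / m + 2 * δ * L := by
    intro δ hδ m hm
    obtain ⟨E, hE1, hE2⟩ := katok_mem hT μ m hε2 hδ
    have hEne : 1 ≤ E.card := hE1 ▸ katok_pos hT μ m hε2 hδ
    have hev := hU _ (isOpen_bowen hT m hε2 E) δ hδ hE2
    rw [← hE1]
    by_contra hcon
    push Not at hcon
    set R := (Real.log 2 + Real.log E.card) / m + 2 * δ * L with hR
    have hbig : ∀ᶠ n : ℕ in (𝓤 : Filter ℕ),
        (Real.log 2 + m * Real.log C.card) / (c - R) < n :=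
      h𝓤top (tendsto_natCast_atTop_atTop.eventually_gt_atTop _)
    obtain ⟨n, hn1, ⟨hn2, hn3⟩, hn4, hn5⟩ := (hev.and (hlt'.and (hpos.and hbig))).exists
    have := log_bound T hm hn4 hC hCne hEne hn2 (U := ⋃ x ∈ E, {y | bowenDist T m x y < ε / 2})
      (by
        intro x hx
        simp only [Set.mem_iUnion, Set.mem_setOf_eq, exists_prop] at hx
        obtain ⟨y, hy, h⟩ := hx
        exact ⟨y, hy, (bowen_lt T m hε2 y x).1 h⟩) (hFsep n) hδ hn1
    rw [div_lt_iff₀ (by linarith)] at hn5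
    rw [← hL, ← hR] at this
    linarith
  refine ENNReal.le_of_forall_pos_le_add fun θ hθ _ => ?_
  have hθ' : (0:ℝ) < θ := hθ
  obtain ⟨δ, hδ0, hδ1, hδ2⟩ : ∃ δ : ℝ, 0 < δ ∧ δ < 1 ∧ 2 * δ * L ≤ θ / 2 := by
    refine ⟨min (1 / 2) (θ / (4 * (L + 1))), by positivity, ?_, ?_⟩
    · exact (min_le_left _ _).trans_lt (by norm_num)
    · calc 2 * min (1 / 2) (θ / (4 * (L + 1))) * L ≤ 2 * (θ / (4 * (L + 1))) * L := by
            gcongr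
            exact min_le_right _ _
        _ = (θ / 2) * (L / (L + 1)) := by field_simp; ring
        _ ≤ (θ / 2) * 1 := by
            gcongr
            rw [div_le_one (by linarith)]
            linarith
        _ = _ := by ring
  have hle : (c : ℝ≥0∞) - θ ≤ katokLowerD T μ (ε / 2) δ := by
    refine le_liminf_of_le (h := ?_)
    have hsm : ∀ᶠ m : ℕ in atTop, Real.log 2 / m < θ / 2 :=
      (tendsto_const_div_atTop_nhds_zero_nat _).eventually_lt_const (by positivity)
    filter_upwards [hsm, eventually_gt_atTop 0] with m hm1 hm
    have hm' : (0:ℝ) < m := by exact_mod_cast hm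
    have := main δ hδ0 m hm
    rw [tsub_le_iff_right, ← ENNReal.ofReal_natCast, ← ENNReal.ofReal_div_of_pos hm',
      ← ENNReal.ofReal_coe_nnreal, ← ENNReal.ofReal_coe_nnreal, ← ENNReal.ofReal_add]
    · refine ENNReal.ofReal_le_ofReal ?_
      rw [add_div] at this
      linarith
    · exact div_nonneg (Real.log_natCast_nonneg _) hm'.le
    · exact hθ'.le
  rw [tsub_le_iff_right] at hle
  refine hle.trans ?_
  gcongr
  exact le_iSup₂ (f := fun (δ : ℝ) (_ : δ ∈ Set.Ioo (0 : ℝ) 1) => katokLowerD T μ (ε / 2) δ)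
    δ ⟨hδ0, hδ1⟩

lemma growth_le [MetricSpace X] [CompactSpace X] [MeasurableSpace X] [BorelSpace X]
    {T : X → X} (hT : Continuous T) {ε : ℝ} (hε : 0 < ε) :
    spanGrowth T (2 * ε) ≤ ⨆ (μ : Measure X) (_ : IsProbabilityMeasure μ)
      (_ : MeasurePreserving T μ μ), katokLower T μ ε := by
  refine ENNReal.le_of_forall_nnreal_lt fun c hc => ?_
  obtain ⟨μ, h1, h2, h3⟩ := key hT (by positivity : 0 < 2 * ε) c hc
  rw [mul_div_cancel_left₀ _ (two_ne_zero)] at h3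
  refine h3.trans ?_
  exact le_iSup_of_le μ (le_iSup_of_le h1 (le_iSup_of_le h2 le_rfl))

lemma map_two : Filter.map (fun ε : ℝ => 2 * ε) (𝓝[>] 0) = 𝓝[>] 0 := by
  have := (Homeomorph.mulLeft₀ (2:ℝ) two_ne_zero).isEmbedding.map_nhdsWithin_eq (Set.Ioi 0) 0
  simp only [Homeomorph.coe_mulLeft₀, mul_zero] at this
  rw [this]
  congr 1
  ext x
  simp only [Set.mem_image, Set.mem_Ioi]
  constructor
  · rintro ⟨y, hy, rfl⟩; positivity
  · intro hx; exact ⟨x / 2, by positivity, by ring⟩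

lemma scale {G S : ℝ → ℝ≥0∞} (h : ∀ ε > 0, G (2 * ε) ≤ S ε) {a : ℝ≥0∞} (ha : a < 1) :
    ∀ᶠ ε in 𝓝[>] (0:ℝ), a * (G (2 * ε) / ENNReal.ofReal (Real.log (1 / (2 * ε)))) ≤
      S ε / ENNReal.ofReal (Real.log (1 / ε)) := by
  lift a to NNReal using ha.ne_top
  have ha' : (a : ℝ) < 1 := by exact_mod_cast ha
  have ht : Tendsto (fun ε : ℝ => Real.log (1 / ε)) (𝓝[>] 0) atTop := by
    simp only [one_div]
    exact Real.tendsto_log_atTop.comp tendsto_inv_nhdsGT_zero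
  filter_upwards [ht.eventually_gt_atTop (Real.log 2 / (1 - a)),
    ht.eventually_gt_atTop (Real.log 2), self_mem_nhdsWithin] with ε h1 h2 h3
  have h3' : (0:ℝ) < ε := h3
  have hl2 : 0 < Real.log 2 := Real.log_pos (by norm_num)
  have e : Real.log (1 / (2 * ε)) = Real.log (1 / ε) - Real.log 2 := by
    rw [one_div, one_div, Real.log_inv, Real.log_inv, Real.log_mul (by norm_num) h3'.ne']
    ring
  rw [div_lt_iff₀ (by linarith)] at h1
  have hk : (a : ℝ) * Real.log (1 / ε) ≤ Real.log (1 / (2 * ε)) := by rw [e]; linarith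
  have hp1 : 0 < Real.log (1 / ε) := by linarith
  have hp2 : 0 < Real.log (1 / (2 * ε)) := by linarith
  have hinv : (a : ℝ≥0∞) / ENNReal.ofReal (Real.log (1 / (2 * ε))) ≤
      (ENNReal.ofReal (Real.log (1 / ε)))⁻¹ := by
    rw [← ENNReal.ofReal_coe_nnreal, ← ENNReal.ofReal_div_of_pos hp2, ← ENNReal.ofReal_inv_of_pos hp1]
    refine ENNReal.ofReal_le_ofReal ?_
    rw [div_le_iff₀ hp2, inv_mul_eq_div, le_div_iff₀ hp1]
    exact hk
  calc (a : ℝ≥0∞) * (G (2 * ε) / ENNReal.ofReal (Real.log (1 / (2 * ε))))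
      = G (2 * ε) * (a / ENNReal.ofReal (Real.log (1 / (2 * ε)))) := by
        simp only [div_eq_mul_inv]; ring
    _ ≤ S ε * (ENNReal.ofReal (Real.log (1 / ε)))⁻¹ := mul_le_mul' (h ε h3') hinv
    _ = _ := (div_eq_mul_inv _ _).symm

lemma limsup_scale {G S : ℝ → ℝ≥0∞} (h : ∀ ε > 0, G (2 * ε) ≤ S ε) :
    limsup (fun ε => G ε / ENNReal.ofReal (Real.log (1 / ε))) (𝓝[>] (0:ℝ)) ≤
      limsup (fun ε => S ε / ENNReal.ofReal (Real.log (1 / ε))) (𝓝[>] (0:ℝ)) := by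
  refine ENNReal.le_of_forall_lt_one_mul_le fun a ha => ?_
  conv_lhs => rw [← map_two]
  rw [← ENNReal.limsup_const_mul_of_ne_top ha.ne_top]
  exact limsup_le_limsup (scale h ha)

lemma liminf_scale {G S : ℝ → ℝ≥0∞} (h : ∀ ε > 0, G (2 * ε) ≤ S ε) :
    liminf (fun ε => G ε / ENNReal.ofReal (Real.log (1 / ε))) (𝓝[>] (0:ℝ)) ≤
      liminf (fun ε => S ε / ENNReal.ofReal (Real.log (1 / ε))) (𝓝[>] (0:ℝ)) := by
  refine ENNReal.le_of_forall_lt_one_mul_le fun a ha => ?_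
  conv_lhs => rw [← map_two]
  rw [← ENNReal.liminf_const_mul_of_ne_top ha.ne_top]
  exact liminf_le_liminf (scale h ha)

end MMDAux

/-- Theorem 3.3 (with suprema over all invariant measures): variational principles for the
upper and lower metric mean dimensions in terms of the Katok entropies. -/
theorem stmt7 {X : Type*} [MetricSpace X] [CompactSpace X] [MeasurableSpace X] [BorelSpace X]
    (T : X → X) (hT : Continuous T) :
    (mdimMUpper T = Filter.limsup (fun ε : ℝ =>
        (⨆ (μ : Measure X) (_ : IsProbabilityMeasure μ) (_ : MeasurePreserving T μ μ),
          katokLower T μ ε)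
          / ENNReal.ofReal (Real.log (1 / ε))) (nhdsWithin 0 (Set.Ioi 0))) ∧
    (mdimMUpper T = Filter.limsup (fun ε : ℝ =>
        (⨆ (μ : Measure X) (_ : IsProbabilityMeasure μ) (_ : MeasurePreserving T μ μ),
          katokUpper T μ ε)
          / ENNReal.ofReal (Real.log (1 / ε))) (nhdsWithin 0 (Set.Ioi 0))) ∧
    (mdimMLower T = Filter.liminf (fun ε : ℝ =>
        (⨆ (μ : Measure X) (_ : IsProbabilityMeasure μ) (_ : MeasurePreserving T μ μ),
          katokLower T μ ε)
          / ENNReal.ofReal (Real.log (1 / ε))) (nhdsWithin 0 (Set.Ioi 0))) ∧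
    (mdimMLower T = Filter.liminf (fun ε : ℝ =>
        (⨆ (μ : Measure X) (_ : IsProbabilityMeasure μ) (_ : MeasurePreserving T μ μ),
          katokUpper T μ ε)
          / ENNReal.ofReal (Real.log (1 / ε))) (nhdsWithin 0 (Set.Ioi 0))) := by
  have hlow : ∀ ε > 0, spanGrowth T (2 * ε) ≤ ⨆ (μ : Measure X) (_ : IsProbabilityMeasure μ)
      (_ : MeasurePreserving T μ μ), katokLower T μ ε := fun ε hε => MMDAux.growth_le hT hε
  have hmid : ∀ ε : ℝ, (⨆ (μ : Measure X) (_ : IsProbabilityMeasure μ)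
      (_ : MeasurePreserving T μ μ), katokLower T μ ε) ≤ ⨆ (μ : Measure X)
      (_ : IsProbabilityMeasure μ) (_ : MeasurePreserving T μ μ), katokUpper T μ ε := fun ε =>
    iSup_mono fun μ => iSup_mono fun _ => iSup_mono fun _ => MMDAux.lower_le_upper T μ ε
  have hup : ∀ ε > 0, (⨆ (μ : Measure X) (_ : IsProbabilityMeasure μ)
      (_ : MeasurePreserving T μ μ), katokUpper T μ ε) ≤ spanGrowth T ε := fun ε hε =>
    iSup_le fun μ => iSup_le fun _ => iSup_le fun _ => MMDAux.upper_le hT μ hε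
  refine ⟨le_antisymm (MMDAux.limsup_scale hlow) ?_,
    le_antisymm (MMDAux.limsup_scale fun ε hε => (hlow ε hε).trans (hmid ε)) ?_,
    le_antisymm (MMDAux.liminf_scale hlow) ?_,
    le_antisymm (MMDAux.liminf_scale fun ε hε => (hlow ε hε).trans (hmid ε)) ?_⟩
  · refine limsup_le_limsup ?_
    filter_upwards [self_mem_nhdsWithin] with ε hε
    exact ENNReal.div_le_div_right ((hmid ε).trans (hup ε hε)) _
  · refine limsup_le_limsup ?_
    filter_upwards [self_mem_nhdsWithin] with ε hε
    exact ENNReal.div_le_div_right (hup ε hε) _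
  · refine liminf_le_liminf ?_
    filter_upwards [self_mem_nhdsWithin] with ε hε
    exact ENNReal.div_le_div_right ((hmid ε).trans (hup ε hε)) _
  · refine liminf_le_liminf ?_
    filter_upwards [self_mem_nhdsWithin] with ε hε
    exact ENNReal.div_le_div_right (hup ε hε) _
end
end

section
/- Let (X,T) be a topological dynamical system with a compatible metric d. Then for every ε>0 and every T-invariant Borel probability measure μ, R_{μ,L∞}(2ε) ≤ inf{ h_μ(T,P) : P a finite Borel partition of X with diam P ≤ ε }. -/
open Filter MeasureTheory Set
open scoped ENNReal Topology

noncomputable section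

open MMD

theorem aux_sum {Y B : Type*} [MeasurableSpace Y] [MeasurableSpace B] (μ : Measure Y)
    [IsProbabilityMeasure μ] (q : Finset (Set B)) (hq : IsFinPartition q) (f : Y → B)
    (hf : Measurable f) (A : Set Y) (hA : MeasurableSet A) :
    ∑ t ∈ q, (μ (A ∩ f ⁻¹' t)).toReal = (μ A).toReal := by
  have h : A = ⋃ t ∈ q, (A ∩ f ⁻¹' t) := by
    ext x
    simp only [Set.mem_iUnion, Set.mem_inter_iff, Set.mem_preimage, exists_prop]
    constructor
    · intro hx
      have : f x ∈ ⋃₀ (q : Set (Set B)) := by rw [hq.2.2]; trivial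
      obtain ⟨t, ht, hxt⟩ := this
      exact ⟨t, ht, hx, hxt⟩
    · rintro ⟨t, _, hx, _⟩
      exact hx
  conv_rhs => rw [h]
  rw [measure_biUnion_finset, ENNReal.toReal_sum]
  · intro t _
    exact measure_ne_top _ _
  · intro t ht t' ht' hne
    exact ((hq.2.1 t ht t' ht' hne).preimage f).mono inter_subset_right inter_subset_right
  · intro t ht
    exact hA.inter (hf (hq.1 t ht))

theorem mem_joinN {X : Type*} (T : X → X) (P : Finset (Set X)) (n : ℕ) (A : Set X) :
    A ∈ joinN T P n ↔ ∃ f : Fin n → Set X, (∀ j, f j ∈ P) ∧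
      (⋂ j : Fin n, T^[(j : ℕ)] ⁻¹' f j) = A := by
  unfold joinN
  simp only [Finset.mem_image, Fintype.mem_piFinset]

theorem joinN_part {X : Type*} [MeasurableSpace X] (T : X → X) (hT : Measurable T)
    (P : Finset (Set X)) (hP : IsFinPartition P) (n : ℕ) : IsFinPartition (joinN T P n) := by
  refine ⟨?_, ?_, ?_⟩
  · intro A hA
    obtain ⟨f, hf, rfl⟩ := (mem_joinN _ _ _ _).1 hA
    exact MeasurableSet.iInter fun j => (hT.iterate j) (hP.1 _ (hf j))
  · intro A hA B hB hne
    obtain ⟨f, hf, rfl⟩ := (mem_joinN _ _ _ _).1 hA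
    obtain ⟨g, hg, rfl⟩ := (mem_joinN _ _ _ _).1 hB
    rw [Set.disjoint_left]
    intro x hx hy
    apply hne
    simp only [Set.mem_iInter, Set.mem_preimage] at hx hy
    have : f = g := by
      funext j
      by_contra hc
      exact Set.disjoint_left.1 (hP.2.1 _ (hf j) _ (hg j) hc) (hx j) (hy j)
    rw [this]
  · rw [Set.eq_univ_iff_forall]
    intro x
    have : ∀ y : X, ∃ t ∈ P, y ∈ t := by
      intro y
      have : y ∈ ⋃₀ (P : Set (Set X)) := by rw [hP.2.2]; trivial
      exact this
    choose cell h1 h2 using this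
    refine ⟨_, (mem_joinN _ _ _ _).2 ⟨fun j => cell (T^[(j : ℕ)] x), fun j => h1 _, rfl⟩, ?_⟩
    simp only [Set.mem_iInter, Set.mem_preimage]
    exact fun j => h2 _

theorem mi_le {Y A B : Type*} [MeasurableSpace Y] [MeasurableSpace A] [MeasurableSpace B]
    (μ : Measure Y) [IsProbabilityMeasure μ] (ξ : Y → A) (hξ : Measurable ξ)
    (η : Y → B) (hη : Measurable η)
    (Q : Finset (Set Y)) (hQ : IsFinPartition Q)
    (hc : ∀ C ∈ Q, ∀ x ∈ C, ∀ y ∈ C, η x = η y)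
    (p : Finset (Set A)) (hp : IsFinPartition p) (q : Finset (Set B)) (hq : IsFinPartition q) :
    ∑ s ∈ p, ∑ t ∈ q,
      (μ (ξ ⁻¹' s ∩ η ⁻¹' t)).toReal *
        Real.log ((μ (ξ ⁻¹' s ∩ η ⁻¹' t)).toReal /
          ((μ (ξ ⁻¹' s)).toReal * (μ (η ⁻¹' t)).toReal)) ≤
    ∑ C ∈ Q, (-((μ C).toReal * Real.log ((μ C).toReal))) := by
  have le1 : ∀ C : Set Y, (μ C).toReal ≤ 1 := fun C => by
    simpa using ENNReal.toReal_mono ENNReal.one_ne_top (prob_le_one (μ := μ) (s := C))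
  have mono : ∀ C D : Set Y, C ⊆ D → (μ C).toReal ≤ (μ D).toReal := fun C D h =>
    ENNReal.toReal_mono (measure_ne_top _ _) (measure_mono h)
  calc _ ≤ ∑ s ∈ p, ∑ t ∈ q, (μ (ξ ⁻¹' s ∩ η ⁻¹' t)).toReal * (-Real.log (μ (η ⁻¹' t)).toReal) := by
        refine Finset.sum_le_sum fun s _ => Finset.sum_le_sum fun t _ => ?_
        have h0 : 0 ≤ (μ (ξ ⁻¹' s ∩ η ⁻¹' t)).toReal := ENNReal.toReal_nonneg
        rcases h0.eq_or_lt with h0 | h0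
        · rw [← h0]; simp
        · have h1 := mono _ _ (inter_subset_left : ξ ⁻¹' s ∩ η ⁻¹' t ⊆ ξ ⁻¹' s)
          have h2 := mono _ _ (inter_subset_right : ξ ⁻¹' s ∩ η ⁻¹' t ⊆ η ⁻¹' t)
          refine mul_le_mul_of_nonneg_left ?_ h0.le
          rw [← Real.log_inv]
          have h3 := h0.trans_le h1
          have h4 := h0.trans_le h2
          apply Real.log_le_log (by positivity)
          rw [inv_eq_one_div, div_le_div_iff₀ (by positivity) h4]
          nlinarith
    _ = ∑ t ∈ q, (μ (η ⁻¹' t)).toReal * (-Real.log (μ (η ⁻¹' t)).toReal) := by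
        rw [Finset.sum_comm]
        refine Finset.sum_congr rfl fun t ht => ?_
        rw [← Finset.sum_mul, ← aux_sum μ p hp ξ hξ (η ⁻¹' t) (hη (hq.1 t ht))]
        simp only [Set.inter_comm]
    _ = ∑ t ∈ q, ∑ C ∈ Q, (μ (C ∩ η ⁻¹' t)).toReal * (-Real.log (μ (η ⁻¹' t)).toReal) := by
        refine Finset.sum_congr rfl fun t ht => ?_
        rw [← Finset.sum_mul]
        congr 1
        rw [← aux_sum μ Q hQ id measurable_id (η ⁻¹' t) (hη (hq.1 t ht))]
        simp only [Set.inter_comm, Set.preimage_id]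
    _ ≤ ∑ t ∈ q, ∑ C ∈ Q, (μ (C ∩ η ⁻¹' t)).toReal * (-Real.log (μ C).toReal) := by
        refine Finset.sum_le_sum fun t _ => Finset.sum_le_sum fun C hC => ?_
        have h0 : 0 ≤ (μ (C ∩ η ⁻¹' t)).toReal := ENNReal.toReal_nonneg
        rcases h0.eq_or_lt with h0 | h0
        · rw [← h0]; simp
        · refine mul_le_mul_of_nonneg_left ?_ h0.le
          have hne : (C ∩ η ⁻¹' t).Nonempty := by
            rw [Set.nonempty_iff_ne_empty]
            intro h
            rw [h] at h0
            simp at h0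
          obtain ⟨x, hxC, hxt⟩ := hne
          have hsub : C ⊆ η ⁻¹' t := by
            intro y hy
            have : η y ∈ t := by rw [hc C hC y hy x hxC]; exact hxt
            exact this
          exact neg_le_neg (Real.log_le_log (h0.trans_le (mono _ _ inter_subset_left))
            (mono _ _ hsub))
    _ = ∑ C ∈ Q, (-((μ C).toReal * Real.log ((μ C).toReal))) := by
        rw [Finset.sum_comm]
        refine Finset.sum_congr rfl fun C hC => ?_
        rw [← Finset.sum_mul, aux_sum μ q hq η hη C (hQ.1 C hC), mul_neg]

theorem key {X : Type*} [MetricSpace X] [CompactSpace X] [MeasurableSpace X] [BorelSpace X]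
    (T : X → X) (hT : Continuous T) (ε : ℝ) (hε : 0 < ε)
    (μ : Measure X) (hμp : IsProbabilityMeasure μ)
    (P : Finset (Set X)) (hP : IsFinPartition P) (hd : ∀ s ∈ P, Metric.diam s ≤ ε)
    (s : ℝ) (hs : 0 < s) (n : ℕ) (hn : 0 < n) :
    RDistLInftyS T μ (2 * ε) s ≤ entP μ (joinN T P n) / (n : ℝ≥0∞) := by
  classical
  have hTm : Measurable T := hT.measurable
  obtain ⟨x0⟩ : Nonempty X := μ.nonempty_of_neZero
  have hcov : ∀ y : X, ∃ t ∈ P, y ∈ t := by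
    intro y
    have : y ∈ ⋃₀ (P : Set (Set X)) := by rw [hP.2.2]; trivial
    exact this
  choose cell h1 h2 using hcov
  have huniq : ∀ y : X, ∀ t ∈ P, y ∈ t → cell y = t := by
    intro y t ht hy
    by_contra hc
    exact Set.disjoint_left.1 (hP.2.1 _ (h1 y) _ ht hc) (h2 y) hy
  let pt : Set X → X := fun t => if h : t.Nonempty then h.some else x0
  have hpt : ∀ t : Set X, t.Nonempty → pt t ∈ t := by
    intro t ht
    simp only [pt, dif_pos ht]
    exact ht.some_mem
  let c : X → X := fun x => pt (cell x)
  have hcm : Measurable c := by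
    intro U _
    have : c ⁻¹' U = ⋃ t ∈ P.filter (fun t => pt t ∈ U), t := by
      ext x
      simp only [Set.mem_preimage, Set.mem_iUnion, Finset.mem_filter, exists_prop]
      constructor
      · intro hx
        exact ⟨cell x, ⟨h1 x, hx⟩, h2 x⟩
      · rintro ⟨t, ⟨ht, hU⟩, hx⟩
        have := huniq x t ht hx
        simpa only [c, this] using hU
    rw [this]
    exact Finset.measurableSet_biUnion _ fun t ht => hP.1 t (Finset.mem_filter.1 ht).1
  have hcd : ∀ x, dist x (c x) ≤ ε := fun x =>
    (Metric.dist_le_diam_of_mem (Metric.isBounded_of_compactSpace) (h2 x)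
      (hpt _ ⟨x, h2 x⟩)).trans (hd _ (h1 x))
  let η : X → (Fin n → X) := fun x k => c (T^[(k : ℕ)] x)
  have hη : Measurable η := measurable_pi_lambda _ fun k => hcm.comp (hTm.iterate k)
  let g : X → X × (Fin n → X) := fun x => (x, η x)
  have hg : Measurable g := measurable_id.prodMk hη
  have hν : IsProbabilityMeasure (μ.map g) := Measure.isProbabilityMeasure_map hg.aemeasurable
  unfold RDistLInftyS
  refine iInf_le_of_le n <| iInf_le_of_le hn <| iInf_le_of_le (μ.map g) <| iInf_le_of_le hν <|
    iInf_le_of_le ?_ <| iInf_le_of_le ?_ <| iInf_le_of_le ?_ ?_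
  · rw [Measure.map_map measurable_fst hg]
    exact Measure.map_id
  · refine ⟨P.image pt, ?_⟩
    have hm : MeasurableSet {p : X × (Fin n → X) | ∀ k, p.2 k ∈ P.image pt} := by
      rw [Set.setOf_forall]
      exact MeasurableSet.iInter fun k =>
        ((measurable_pi_apply k).comp measurable_snd) (P.image pt).measurableSet
    rw [Measure.map_apply hg hm]
    have : g ⁻¹' {p : X × (Fin n → X) | ∀ k, p.2 k ∈ P.image pt} = Set.univ := by
      rw [Set.eq_univ_iff_forall]
      intro x k
      exact Finset.mem_image_of_mem pt (h1 _)
    rw [this, measure_univ]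
  · refine (lintegral_map_le _ _).trans_lt ?_
    have hz : ∀ x : X, (Nat.card {k : Fin n // 2 * ε ≤ dist (T^[(k : ℕ)] (g x).1) ((g x).2 k)}
        : ℝ≥0∞) = 0 := by
      intro x
      have : IsEmpty {k : Fin n // 2 * ε ≤ dist (T^[(k : ℕ)] (g x).1) ((g x).2 k)} := by
        refine ⟨fun ⟨k, hk⟩ => ?_⟩
        have := hk.trans (hcd (T^[(k : ℕ)] x))
        linarith
      simp
    simp only [hz, lintegral_zero]
    rw [ENNReal.ofReal_pos]
    positivity
  · refine ENNReal.div_le_div_right ?_ _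
    unfold mutualInfo entP
    refine iSup_le fun p => iSup_le fun hp => iSup_le fun q => iSup_le fun hq => ?_
    rw [← ENNReal.ofReal_sum_of_nonneg]
    · apply ENNReal.ofReal_le_ofReal
      refine le_trans (le_of_eq ?_) (mi_le μ id measurable_id η hη (joinN T P n)
        (joinN_part T hTm P hP n) ?_ p hp q hq)
      · refine Finset.sum_congr rfl fun a ha => Finset.sum_congr rfl fun t ht => ?_
        have ma : MeasurableSet ((Prod.fst : X × (Fin n → X) → X) ⁻¹' a) := measurable_fst (hp.1 a ha)
        have mt : MeasurableSet ((Prod.snd : X × (Fin n → X) → _) ⁻¹' t) := measurable_snd (hq.1 t ht)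
        rw [Measure.map_apply hg (ma.inter mt), Measure.map_apply hg ma, Measure.map_apply hg mt]
        rfl
      · intro C hC x hx y hy
        obtain ⟨f, hf, rfl⟩ := (mem_joinN _ _ _ _).1 hC
        simp only [Set.mem_iInter, Set.mem_preimage] at hx hy
        funext k
        change pt (cell _) = pt (cell _)
        rw [huniq _ _ (hf k) (hx k), huniq _ _ (hf k) (hy k)]
    · intro C _
      have h0 : 0 ≤ (μ C).toReal := ENNReal.toReal_nonneg
      have h1 : (μ C).toReal ≤ 1 := by
        simpa using ENNReal.toReal_mono ENNReal.one_ne_top (prob_le_one (μ := μ) (s := C))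
      have := mul_nonneg h0 (neg_nonneg.2 (Real.log_nonpos h0 h1))
      linarith

/-- Proposition 3.4: for every `ε > 0` and every invariant Borel probability measure `μ`,
`R_{μ,L∞}(2ε) ≤ inf { h_μ(T,P) : P a finite Borel partition with diam P ≤ ε }`. -/
theorem stmt9 {X : Type*} [MetricSpace X] [CompactSpace X] [MeasurableSpace X] [BorelSpace X]
    (T : X → X) (hT : Continuous T)
    (ε : ℝ) (hε : 0 < ε)
    (μ : Measure X) (hμp : IsProbabilityMeasure μ) (hμinv : MeasurePreserving T μ μ) :
    RDistLInfty T μ (2 * ε) ≤ infEntRate T μ ε := by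
  unfold RDistLInfty infEntRate
  refine iSup_le fun s => iSup_le fun hs => le_iInf fun P => le_iInf fun hP => le_iInf fun hd => ?_
  unfold entRate
  refine le_liminf_of_le (by isBoundedDefault) ?_
  filter_upwards [eventually_gt_atTop 0] with n hn
  exact key T hT ε hε μ hμp P hP hd s hs n hn
end
end
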